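/- Let G be a countable group, let L be a finite set, and let G act on L^G by left-shifts: (g·x)(h) = x(g⁻¹h). Let F be a G-invariant sub-σ-algebra of the Borel σ-algebra of L^G generated by a countable collection of clopen sets. Equip the set M_G(L^G) of G-invariant Borel probability measures on L^G with the weak* topology. Then the map μ ↦ rh_G(L^G, μ | F) is upper-semicontinuous on the subspace of those invariant measures that are aperiodic or ergodic; moreover, if G is finitely generated then this map is upper-semicontinuous on all of M_G(L^G). -/

import Mathlib

open MeasureTheory Set Function
open scoped ENNReal symmDiff

/-- A set in a measurable space is *analytic* if it is the image of a Borel subset of a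
standard Borel space under a Borel (measurable) map. -/
def IsAnalyticS {W : Type*} [MeasurableSpace W] (A : Set W) : Prop :=
  ∃ (Z : Type) (mZ : MeasurableSpace Z), @StandardBorelSpace Z mZ ∧
    ∃ (B : Set Z) (f : Z → W), MeasurableSet[mZ] B ∧ @Measurable Z W mZ _ f ∧ f '' B = A

/-- The smallest `G`-invariant sub-σ-algebra containing the collection `ξ`. -/
def sigmaG (G : Type*) {X : Type*} [Group G] [MulAction G X] (ξ : Set (Set X)) :
    MeasurableSpace X :=
  MeasurableSpace.generateFrom {B | ∃ (g : G), ∃ A ∈ ξ, B = (fun x => g • x) ⁻¹' A}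

/-- The σ-algebra of `G`-invariant measurable sets. -/
def invSigma (G X : Type*) [Group G] [MulAction G X] [MeasurableSpace X] :
    MeasurableSpace X :=
  MeasurableSpace.generateFrom {A | MeasurableSet A ∧ ∀ g : G, (fun x => g • x) ⁻¹' A = A}

/-- Conditional Shannon entropy `H_μ(α | m)` of a countable partition `α` given a
sub-σ-algebra `m`, valued in `[0,∞]`. -/
noncomputable def condEnt {X : Type*} (m : MeasurableSpace X) [mX : MeasurableSpace X]
    (μ : Measure X) {ι : Type*} (α : ι → Set X) : ℝ≥0∞ :=
  ∫⁻ x, ∑' i, ENNReal.ofReal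
    (Real.negMulLog ((μ[(α i).indicator (fun _ => (1 : ℝ)) | m]) x)) ∂μ

/-- Shannon entropy `H_μ(α)` of a countable partition. -/
noncomputable def shEnt {X : Type*} [MeasurableSpace X] (μ : Measure X)
    {ι : Type*} (α : ι → Set X) : ℝ≥0∞ :=
  ∑' i, ENNReal.ofReal (Real.negMulLog (μ (α i)).toReal)

/-- `α` is a countable Borel partition of `X` (indexed by `ℕ`, cells may be empty). -/
def IsPartition {X : Type*} [MeasurableSpace X] (α : ℕ → Set X) : Prop :=
  (∀ i, MeasurableSet (α i)) ∧ Pairwise (Function.onFun Disjoint α) ∧ (⋃ i, α i) = univ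

/-- Every set of `ξ` agrees with an `m`-measurable set modulo `μ`-null sets. -/
def SubsetMod {X : Type*} (m : MeasurableSpace X) [mX : MeasurableSpace X] (μ : Measure X)
    (ξ : Set (Set X)) : Prop :=
  ∀ A ∈ ξ, ∃ B, MeasurableSet[m] B ∧ μ (A ∆ B) = 0

/-- Outer Rokhlin entropy `rh_{G,μ}(ξ | F)`. -/
noncomputable def outerRokhlin (G : Type*) {X : Type*} (ξ : Set (Set X))
    (F : MeasurableSpace X) [Group G] [MulAction G X] [mX : MeasurableSpace X]
    (μ : Measure X) : ℝ≥0∞ :=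
  sInf { h | ∃ α : ℕ → Set X, IsPartition α ∧
      SubsetMod (sigmaG G (Set.range α) ⊔ F ⊔ invSigma G X) μ ξ ∧
      h = condEnt (F ⊔ invSigma G X) μ α }

/-- Rokhlin entropy `rh_G(X, μ | F)`. -/
noncomputable def rokhlin (G : Type*) {X : Type*} (F : MeasurableSpace X) [Group G]
    [MulAction G X] [mX : MeasurableSpace X] (μ : Measure X) : ℝ≥0∞ :=
  outerRokhlin G {A | MeasurableSet A} F μ

/-- Outer Rokhlin entropy `rh_{G,μ}(S | F)` of a sub-σ-algebra `S`. -/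
noncomputable def outerRokhlinAlg (G : Type*) {X : Type*} (S F : MeasurableSpace X) [Group G]
    [MulAction G X] [mX : MeasurableSpace X] (μ : Measure X) : ℝ≥0∞ :=
  outerRokhlin G {A | MeasurableSet[S] A} F μ

/-- The action of `G` on `(X, μ)` is probability-measure-preserving. -/
def IsPmp (G : Type*) {X : Type*} [Group G] [MulAction G X] [MeasurableSpace X]
    (μ : Measure X) : Prop :=
  ∀ g : G, MeasurePreserving (fun x => g • x) μ μ

/-- Aperiodicity: μ-almost-every `G`-orbit is infinite. -/
def Aperiodic (G : Type*) {X : Type*} [Group G] [MulAction G X] [MeasurableSpace X]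
    (μ : Measure X) : Prop :=
  ∀ᵐ x ∂μ, (MulAction.orbit G x).Infinite

/-- Ergodicity of a measure: every invariant Borel set is null or conull. -/
def IsErgodicInv (G : Type*) {X : Type*} [Group G] [MulAction G X] [MeasurableSpace X]
    (ν : Measure X) : Prop :=
  ∀ A : Set X, MeasurableSet A → (∀ g : G, (fun x => g • x) ⁻¹' A = A) → ν A = 0 ∨ ν A = 1

/-- `F` is a `G`-invariant σ-algebra. -/
def InvariantAlg (G : Type*) {X : Type*} (F : MeasurableSpace X) [Group G] [MulAction G X] :
    Prop :=
  ∀ (g : G) (A : Set X), MeasurableSet[F] A → MeasurableSet[F] ((fun x => g • x) ⁻¹' A)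

/-- `F` is countably generated. -/
def CountablyGen {X : Type*} (F : MeasurableSpace X) : Prop :=
  ∃ S : Set (Set X), S.Countable ∧ F = MeasurableSpace.generateFrom S

/-- `π` is an ergodic decomposition map for `μ`. -/
def IsErgDecomp (G : Type*) {X : Type*} [Group G] [MulAction G X] [MeasurableSpace X]
    (μ : Measure X) (π : X → Measure X) : Prop :=
  Measurable π ∧
  (∀ x, IsProbabilityMeasure (π x) ∧ IsPmp G (π x) ∧ IsErgodicInv G (π x)) ∧
  (∀ (g : G) (x : X), π (g • x) = π x) ∧
  (∀ ν : Measure X, IsProbabilityMeasure ν → IsPmp G ν → IsErgodicInv G ν →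
      ν {x | π x = ν} = 1) ∧
  (∀ B : Set X, MeasurableSet B → μ B = ∫⁻ x, π x B ∂μ)

/-- The left-shift action of `G` on `L^G = (G → L)`: `(g • x) h = x (g⁻¹ * h)`. -/
instance shiftMulAction {G L : Type*} [Group G] : MulAction G (G → L) where
  smul g x := fun h => x (g⁻¹ * h)
  one_smul x := by funext h; show x (1⁻¹ * h) = x h; simp
  mul_smul g g' x := by
    funext h; show x ((g * g')⁻¹ * h) = x (g'⁻¹ * (g⁻¹ * h)); simp [mul_assoc]

/-!
It suffices to find, for each `c > rh_G(X, μ | F)`, a locally constant function `θ` whose integral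
against `μ` is less than `c` and whose integral against every invariant measure `ν` bounds
`rh_G(X, ν | F)`, for integrating `θ` is a weak*-continuous function of the measure.

Such a `θ` is a code length. A partition that almost realises the entropy of `μ` predicts the
generating labelling `P` up to a small error from finitely many translates of a finite-valued
labelling `a`, finitely many clopen generators of `F` and finitely many invariant sets, and its
cost is close to the mean length of an ideal code for `a`. Replacing `a` by a locally constant
approximation and coding, next to `a`, the true value of `P` wherever the prediction fails keeps
the coding generating for every invariant measure, and adds little to the cost for `μ`.

Membership in an invariant set need not be approximable by a locally constant invariant function.
Instead it is recorded by labels on a sparse clopen set of markers. When `μ` is ergodic it is almost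
surely constant and no markers are needed; when `μ` is aperiodic the markers approximate a complete
section of small measure; when `G` is finitely generated they form the boundary, in the Cayley
graph, of a clopen approximation of the invariant set. On a marked orbit the context of the code is
known only through the markers, so there the letters of `a` are gathered at the markers and each
gathered word is replaced by its rank in order of decreasing probability.
-/

open Filter Topology
open scoped NNReal ProbabilityTheory

/-! ### Labellings -/

section Labellings

variable {X T R ι : Type*} {m m' : MeasurableSpace X} {f : X → T}

/-- Measurability of a function into a set of labels without structure, i.e. for the discrete
σ-algebra on the labels. Stated like `IsLocallyConstant`, so that label sets built from products,
functions and options need no `MeasurableSpace` instances. -/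
def LabelMeasurable (m : MeasurableSpace X) (f : X → T) : Prop :=
  ∀ s : Set T, MeasurableSet[m] (f ⁻¹' s)

lemma LabelMeasurable.mono (hf : LabelMeasurable m f) (h : m ≤ m') : LabelMeasurable m' f :=
  fun s => h _ (hf s)

lemma LabelMeasurable.measurable [MeasurableSpace T] (hf : LabelMeasurable m f) :
    Measurable[m] f :=
  fun s _ => hf s

lemma LabelMeasurable.comp (g : T → R) (hf : LabelMeasurable m f) :
    LabelMeasurable m fun x => g (f x) :=
  fun s => hf (g ⁻¹' s)

lemma LabelMeasurable.of_factorsThrough {g : X → R} (hf : LabelMeasurable m f)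
    (hg : FactorsThrough g f) : LabelMeasurable m g := fun s => by
  have hs : g ⁻¹' s = f ⁻¹' (f '' (g ⁻¹' s)) :=
    (subset_preimage_image f _).antisymm fun x ⟨y, hy, hxy⟩ => by
      rwa [mem_preimage, ← hg hxy]
  exact hs ▸ hf _

lemma LabelMeasurable.of_singletons [Countable T]
    (hf : ∀ t, MeasurableSet[m] (f ⁻¹' {t})) : LabelMeasurable m f := by
  intro s
  rw [← biUnion_preimage_singleton]
  exact MeasurableSet.biUnion s.to_countable fun t _ => hf t

lemma LabelMeasurable.of_mem_iff {p : X → Prop} (hp : MeasurableSet[m] {x | p x}) :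
    LabelMeasurable m p := by
  refine .of_singletons fun q => ?_
  by_cases hq : q
  · simpa [preimage, hq] using hp
  · simpa [preimage, hq, compl_ofPred] using hp.compl

lemma LabelMeasurable.pi [Finite ι] [Countable T] {f : ι → X → T}
    (hf : ∀ i, LabelMeasurable m (f i)) : LabelMeasurable m fun x i => f i x := by
  refine .of_singletons fun t => ?_
  have : (fun x i => f i x) ⁻¹' {t} = ⋂ i, f i ⁻¹' {t i} := by
    ext x
    simp [funext_iff]
  rw [this]
  exact MeasurableSet.iInter fun i => hf i _

lemma LabelMeasurable.prodMk [Countable T] [Countable R] {g : X → R}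
    (hf : LabelMeasurable m f) (hg : LabelMeasurable m g) :
    LabelMeasurable m fun x => (f x, g x) :=
  .of_singletons fun t => by
    rw [← singleton_prod_singleton, mk_preimage_prod]
    exact (hf _).inter (hg _)

lemma LabelMeasurable.of_isLocallyConstant [TopologicalSpace X] [OpensMeasurableSpace X]
    (hf : IsLocallyConstant f) : LabelMeasurable ‹MeasurableSpace X› f :=
  fun s => (hf s).measurableSet

end Labellings

/-! ### Code lengths and conditional entropy -/

/-- The ideal code length `-log p` of an event of probability `p`, with `codeLen 0 = ⊤`
and `codeLen p = 0` for `p ≥ 1`. -/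
noncomputable def codeLen (p : ℝ≥0∞) : ℝ≥0∞ := (-ENNReal.log p).toENNReal

section CodeLen

lemma codeLen_zero : codeLen 0 = ⊤ := by simp [codeLen]

lemma codeLen_ofReal {p : ℝ} (hp : 0 < p) :
    codeLen (ENNReal.ofReal p) = ENNReal.ofReal (-Real.log p) := by
  rw [codeLen, ENNReal.log_ofReal_of_pos hp, ← EReal.coe_neg, EReal.real_coe_toENNReal]

lemma codeLen_one : codeLen 1 = 0 := by simp [codeLen]

lemma codeLen_antitone : Antitone codeLen := fun _ _ h =>
  EReal.toENNReal_le_toENNReal (EReal.neg_le_neg_iff.2 (ENNReal.log_monotone h))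

lemma measurable_codeLen : Measurable codeLen :=
  ENNReal.measurable_log.neg.ereal_toENNReal

lemma continuous_codeLen : Continuous codeLen := by
  exact EReal.continuous_toENNReal.comp ENNReal.continuous_log.neg

lemma codeLen_ne_top {p : ℝ≥0∞} (hp : p ≠ 0) : codeLen p ≠ ⊤ := by
  rw [codeLen, EReal.toENNReal_ne_top_iff]
  simpa [EReal.neg_eq_top_iff] using hp

lemma codeLen_mul_le (p q : ℝ≥0∞) : codeLen (p * q) ≤ codeLen p + codeLen q := by
  rcases eq_or_ne p 0 with rfl | hp
  · simp [codeLen_zero]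
  rcases eq_or_ne q 0 with rfl | hq
  · simp [codeLen_zero]
  rw [codeLen, ENNReal.log_mul_add, EReal.neg_add (by simp [hp]) (by simp [hq]), sub_eq_add_neg]
  exact EReal.toENNReal_add_le

end CodeLen

/-- The conditional probability of `A` given `m`, as an extended nonnegative function. -/
noncomputable def condProb {X : Type*} (m : MeasurableSpace X) [MeasurableSpace X]
    (μ : Measure X) (A : Set X) (x : X) : ℝ≥0∞ :=
  ENNReal.ofReal ((μ⟦A | m⟧) x)

section ConditionalEntropy

variable {X T : Type*} {m : MeasurableSpace X} [mX : MeasurableSpace X] {μ : Measure X}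

lemma measurable_condProb (A : Set X) : Measurable[m] (condProb m μ A) :=
  stronglyMeasurable_condExp.measurable.ennreal_ofReal

lemma lintegral_condProb_mul (hm : m ≤ mX) [IsFiniteMeasure μ] {A : Set X}
    (hA : MeasurableSet A) {g : X → ℝ≥0∞} (hg : Measurable[m] g) :
    ∫⁻ x, condProb m μ A x * g x ∂μ = ∫⁻ x in A, g x ∂μ := by
  have hA1 : Integrable (A.indicator fun _ => (1 : ℝ)) μ := (integrable_const 1).indicator hA
  have htrim : (μ.withDensity (condProb m μ A)).trim hm = (μ.restrict A).trim hm := by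
    refine @Measure.ext X m _ _ fun s hs => ?_
    rw [trim_measurableSet_eq hm hs, trim_measurableSet_eq hm hs,
      withDensity_apply _ (hm s hs), Measure.restrict_apply (hm s hs)]
    unfold condProb
    rw [← ofReal_integral_eq_lintegral_ofReal integrable_condExp.integrableOn
        (ae_restrict_of_ae (condExp_nonneg (Eventually.of_forall
          (indicator_nonneg fun _ _ => zero_le_one)))),
      setIntegral_condExp hm hA1 hs, setIntegral_indicator hA, setIntegral_one_eq_measureReal,
      ofReal_measureReal]
  have hdensity := lintegral_withDensity_eq_lintegral_mul μ
    ((measurable_condProb (m := m) (μ := μ) A).mono hm le_rfl) (hg.mono hm le_rfl)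
  rw [← lintegral_trim hm hg, ← htrim, lintegral_trim hm hg, hdensity]
  rfl

lemma condProb_mono [IsFiniteMeasure μ] {A B : Set X} (hA : MeasurableSet A)
    (hB : MeasurableSet B) (hAB : A ⊆ B) : condProb m μ A ≤ᵐ[μ] condProb m μ B := by
  have := condExp_mono (m := m) (μ := μ) ((integrable_const (1 : ℝ)).indicator hA)
    ((integrable_const (1 : ℝ)).indicator hB)
    (Eventually.of_forall (indicator_le_indicator_of_subset hAB fun _ => zero_le_one))
  filter_upwards [this] with x hx
  exact ENNReal.ofReal_le_ofReal hx

lemma lintegral_tsum_condProb_mul (hm : m ≤ mX) [IsFiniteMeasure μ] [Countable T] {b : X → T}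
    (hb : LabelMeasurable mX b) {g : T → X → ℝ≥0∞} (hg : ∀ t, Measurable[m] (g t)) :
    ∫⁻ x, ∑' t, condProb m μ (b ⁻¹' {t}) x * g t x ∂μ = ∫⁻ x, g (b x) x ∂μ := by
  have hgm : ∀ t, Measurable (g t) := fun t => (hg t).mono hm le_rfl
  have hpm : ∀ t, Measurable (condProb m μ (b ⁻¹' {t})) := fun t =>
    (measurable_condProb _).mono hm le_rfl
  calc ∫⁻ x, ∑' t, condProb m μ (b ⁻¹' {t}) x * g t x ∂μ
      = ∑' t, ∫⁻ x, (b ⁻¹' {t}).indicator (g t) x ∂μ := by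
        rw [lintegral_tsum fun t => by exact ((hpm t).mul (hgm t)).aemeasurable]
        exact tsum_congr fun t => by
          rw [lintegral_condProb_mul hm (hb _) (hg t), lintegral_indicator (hb _)]
    _ = ∫⁻ x, ∑' t, (b ⁻¹' {t}).indicator (g t) x ∂μ :=
        (lintegral_tsum fun t => ((hgm t).indicator (hb _)).aemeasurable).symm
    _ = ∫⁻ x, g (b x) x ∂μ := by
        refine lintegral_congr fun x => ?_
        rw [tsum_eq_single (b x) fun t ht =>
          indicator_of_notMem (show x ∉ b ⁻¹' {t} from fun h => ht h.symm) _]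
        exact indicator_of_mem (show x ∈ b ⁻¹' {b x} from rfl) _

lemma ofReal_negMulLog {p : ℝ} (hp0 : 0 ≤ p) :
    ENNReal.ofReal (Real.negMulLog p) = ENNReal.ofReal p * codeLen (ENNReal.ofReal p) := by
  rcases hp0.eq_or_lt with rfl | hp
  · simp
  · rw [codeLen_ofReal hp, ← ENNReal.ofReal_mul hp0, Real.negMulLog, neg_mul_comm]

lemma condEnt_eq_lintegral_codeLen (hm : m ≤ mX) [IsFiniteMeasure μ] [Countable T] {b : X → T}
    (hb : LabelMeasurable mX b) :
    condEnt m μ (fun t => b ⁻¹' {t}) = ∫⁻ x, codeLen (condProb m μ (b ⁻¹' {b x}) x) ∂μ := by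
  rw [← lintegral_tsum_condProb_mul hm hb
    (g := fun t x => codeLen (condProb m μ (b ⁻¹' {t}) x))
    fun t => measurable_codeLen.comp (measurable_condProb _)]
  refine lintegral_congr_ae ?_
  have hnonneg : ∀ᵐ x ∂μ, ∀ t, 0 ≤ (μ⟦b ⁻¹' {t} | m⟧) x := ae_all_iff.2 fun t =>
    condExp_nonneg (Eventually.of_forall (indicator_nonneg fun _ _ => zero_le_one))
  filter_upwards [hnonneg] with x hx
  exact tsum_congr fun t => ofReal_negMulLog (hx t)

lemma condEnt_comp_le {R : Type*} (hm : m ≤ mX) [IsFiniteMeasure μ] [Countable T] [Countable R]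
    {b : X → T} (hb : LabelMeasurable mX b) (f : T → R) :
    condEnt m μ (fun r => (fun x => f (b x)) ⁻¹' {r}) ≤ condEnt m μ (fun t => b ⁻¹' {t}) := by
  rw [condEnt_eq_lintegral_codeLen hm hb, condEnt_eq_lintegral_codeLen hm (hb.comp f)]
  refine lintegral_mono_ae ?_
  have hmono : ∀ᵐ x ∂μ, ∀ t, condProb m μ (b ⁻¹' {t}) x ≤
      condProb m μ ((fun x => f (b x)) ⁻¹' {f t}) x := ae_all_iff.2 fun t =>
    condProb_mono (hb _) (hb.comp f _) fun x (hx : b x = t) => congrArg f hx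
  filter_upwards [hmono] with x hx
  exact codeLen_antitone (hx (b x))

lemma mul_codeLen_add_le {p q : ℝ≥0∞} (hp : p ≤ 1) (hq : q ≤ 1) :
    p * codeLen p + p ≤ p * codeLen q + q := by
  rcases eq_or_ne p 0 with rfl | hp0
  · simp
  rcases eq_or_ne q 0 with rfl | hq0
  · simp [codeLen_zero, ENNReal.mul_top hp0]
  obtain ⟨a, ha, rfl⟩ : ∃ a : ℝ, 0 < a ∧ ENNReal.ofReal a = p :=
    ⟨p.toReal, ENNReal.toReal_pos hp0 (hp.trans_lt ENNReal.one_lt_top).ne,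
      ENNReal.ofReal_toReal (hp.trans_lt ENNReal.one_lt_top).ne⟩
  obtain ⟨b, hb, rfl⟩ : ∃ b : ℝ, 0 < b ∧ ENNReal.ofReal b = q :=
    ⟨q.toReal, ENNReal.toReal_pos hq0 (hq.trans_lt ENNReal.one_lt_top).ne,
      ENNReal.ofReal_toReal (hq.trans_lt ENNReal.one_lt_top).ne⟩
  have hloga : 0 ≤ -Real.log a := by
    linarith [Real.log_nonpos ha.le (ENNReal.ofReal_le_one.1 hp)]
  have hlogb : 0 ≤ -Real.log b := by
    linarith [Real.log_nonpos hb.le (ENNReal.ofReal_le_one.1 hq)]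
  have hlog : a * (Real.log b - Real.log a) ≤ b - a := by
    rw [← Real.log_div hb.ne' ha.ne']
    calc a * Real.log (b / a) ≤ a * (b / a - 1) := by
          gcongr
          exact Real.log_le_sub_one_of_pos (div_pos hb ha)
      _ = b - a := by field_simp
  rw [codeLen_ofReal ha, codeLen_ofReal hb, ← ENNReal.ofReal_mul ha.le, ← ENNReal.ofReal_mul ha.le,
    ← ENNReal.ofReal_add (by positivity) ha.le, ← ENNReal.ofReal_add (by positivity) hb.le]
  exact ENNReal.ofReal_le_ofReal (by linarith)

lemma condProb_le_one (hm : m ≤ mX) [IsProbabilityMeasure μ] {A : Set X} (hA : MeasurableSet A) :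
    condProb m μ A ≤ᵐ[μ] fun _ => 1 := by
  filter_upwards [condProb_mono (m := m) (μ := μ) hA MeasurableSet.univ (subset_univ A)] with x hx
  simpa [condProb, condExp_const hm] using hx

lemma condEnt_le_lintegral_codeLen (hm : m ≤ mX) [IsProbabilityMeasure μ] [Countable T]
    {b : X → T} (hb : LabelMeasurable mX b) {q : X → T → ℝ≥0∞}
    (hqm : ∀ t, Measurable[m] fun x => q x t) (hq : ∀ x, ∑' t, q x t ≤ 1) :
    condEnt m μ (fun t => b ⁻¹' {t}) ≤ ∫⁻ x, codeLen (q x (b x)) ∂μ := by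
  set p : T → X → ℝ≥0∞ := fun t => condProb m μ (b ⁻¹' {t})
  have hpm : ∀ t, Measurable (p t) := fun t => (measurable_condProb _).mono hm le_rfl
  have hpq : ∀ᵐ x ∂μ, ∑' t, (p t x * codeLen (p t x) + p t x) ≤
      ∑' t, (p t x * codeLen (q x t) + q x t) := by
    filter_upwards [ae_all_iff.2 fun t => condProb_le_one (μ := μ) hm (hb {t})] with x hx
    exact ENNReal.tsum_le_tsum fun t =>
      mul_codeLen_add_le (hx t) ((ENNReal.le_tsum t).trans (hq x))
  have hone : ∫⁻ x, ∑' t, p t x ∂μ = 1 := by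
    simpa using lintegral_tsum_condProb_mul (μ := μ) hm hb (g := fun _ _ => 1)
      fun _ => measurable_const
  rw [condEnt_eq_lintegral_codeLen hm hb]
  refine (ENNReal.add_le_add_iff_right ENNReal.one_ne_top).1 ?_
  calc ∫⁻ x, codeLen (p (b x) x) ∂μ + 1
      = ∫⁻ x, ∑' t, (p t x * codeLen (p t x) + p t x) ∂μ := by
        rw [← hone, ← lintegral_tsum_condProb_mul hm hb (g := fun t x => codeLen (p t x))
          fun t => measurable_codeLen.comp (measurable_condProb _),
          ← lintegral_add_right _ (Measurable.tsum hpm)]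
        exact lintegral_congr fun x => ENNReal.tsum_add.symm
    _ ≤ ∫⁻ x, ∑' t, (p t x * codeLen (q x t) + q x t) ∂μ := lintegral_mono_ae hpq
    _ ≤ ∫⁻ x, (∑' t, p t x * codeLen (q x t) + 1) ∂μ := by
        refine lintegral_mono fun x => ?_
        rw [ENNReal.tsum_add]
        gcongr
        exact hq x
    _ = ∫⁻ x, codeLen (q x (b x)) ∂μ + 1 := by
        rw [lintegral_add_right _ measurable_const, lintegral_tsum_condProb_mul hm hb
          (g := fun t x => codeLen (q x t)) fun t => measurable_codeLen.comp (hqm t)]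
        simp

end ConditionalEntropy

section FiniteKernel

variable {X T : Type*} {m : MeasurableSpace X} [mX : MeasurableSpace X] {μ : Measure X}

/-- A strictly positive sub-probability vector: the weights of a code all of whose words have
finite length. -/
structure IsPosSubprob [Fintype T] (q : T → ℝ≥0∞) : Prop where
  ne_zero : ∀ t, q t ≠ 0
  sum_le_one : ∑ t, q t ≤ 1

lemma sum_condProb_le_one (hm : m ≤ mX) [IsProbabilityMeasure μ] [Fintype T] {b : X → T}
    (hb : LabelMeasurable mX b) : ∀ᵐ x ∂μ, ∑ t, condProb m μ (b ⁻¹' {t}) x ≤ 1 := by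
  classical
  have hint : ∀ t, Integrable ((b ⁻¹' {t}).indicator fun _ => (1 : ℝ)) μ := fun t =>
    (integrable_const 1).indicator (hb _)
  have hone : ∑ t, (b ⁻¹' {t}).indicator (fun _ => (1 : ℝ)) = fun _ => 1 := by
    funext x
    simp [indicator_apply]
  have hsum := condExp_finsetSum (s := Finset.univ) (fun t _ => hint t) m
  rw [hone, condExp_const hm] at hsum
  have hnonneg : ∀ᵐ x ∂μ, ∀ t, 0 ≤ (μ⟦b ⁻¹' {t} | m⟧) x := ae_all_iff.2 fun t =>
    condExp_nonneg (Eventually.of_forall (indicator_nonneg fun _ _ => zero_le_one))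
  filter_upwards [hsum, hnonneg] with x hx h0
  simp only [condProb, ← ENNReal.ofReal_sum_of_nonneg fun t _ => h0 t]
  rw [Finset.sum_apply] at hx
  rw [← hx, ENNReal.ofReal_one]

/-- The probability `p` rounded down to a multiple `i / M`, encoded as the index `i`. -/
noncomputable def roundDown (M : ℕ) (p : ℝ≥0∞) : Fin (M + 1) :=
  ⟨min ⌊(p * M).toNNReal⌋₊ M, by omega⟩

lemma measurable_roundDown (M : ℕ) : Measurable (roundDown M) :=
  (Measurable.of_discrete (f := fun n : ℕ => (⟨min n M, by omega⟩ : Fin (M + 1)))).comp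
    (Nat.measurable_floor.comp (measurable_id.mul_const _).ennreal_toNNReal)

variable {M : ℕ} {p : ℝ≥0∞}

lemma roundDown_le (hp : p ≠ ⊤) : (roundDown M p : ℝ≥0∞) ≤ p * M := by
  rw [← ENNReal.coe_toNNReal (ENNReal.mul_ne_top hp (ENNReal.natCast_ne_top M))]
  have : (roundDown M p : ℝ≥0) ≤ (p * M).toNNReal :=
    (Nat.cast_le.2 (min_le_left _ _)).trans (Nat.floor_le zero_le)
  exact_mod_cast this

lemma le_roundDown_add_one (hp : p ≤ 1) : p * M ≤ roundDown M p + 1 := by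
  rw [← ENNReal.coe_toNNReal (ENNReal.mul_ne_top (hp.trans_lt ENNReal.one_lt_top).ne
    (ENNReal.natCast_ne_top M))]
  have hM : ⌊(p * M).toNNReal⌋₊ ≤ M :=
    Nat.floor_le_of_le (by
      simpa using ENNReal.toNNReal_mono (ENNReal.natCast_ne_top M)
        (mul_le_of_le_one_left' hp : p * M ≤ M))
  have : (p * M).toNNReal ≤ (roundDown M p : ℝ≥0) + 1 := by
    simp only [roundDown, min_eq_left hM]
    exact (Nat.lt_floor_add_one _).le
  exact_mod_cast this

/-- The probability vector proportional to `r + 1`; adding `1` makes it positive. -/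
noncomputable def smoothedVector [Fintype T] (r : T → Fin (M + 1)) (t : T) : ℝ≥0∞ :=
  (r t + 1) / ∑ l, ((r l : ℝ≥0∞) + 1)

lemma isPosSubprob_smoothedVector [Fintype T] (r : T → Fin (M + 1)) :
    IsPosSubprob (smoothedVector r) where
  ne_zero t := by simp [smoothedVector, ENNReal.div_eq_zero_iff]
  sum_le_one := by
    simp only [smoothedVector, div_eq_mul_inv, ← Finset.sum_mul]
    exact ENNReal.mul_inv_le_one _

lemma mul_le_smoothedVector [Fintype T] {p : T → ℝ≥0∞} (hp : ∑ t, p t ≤ 1) (t : T) :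
    p t * (M / (M + Fintype.card T)) ≤ smoothedVector (fun l => roundDown M (p l)) t := by
  have hp1 : ∀ l, p l ≤ 1 := fun l =>
    (Finset.single_le_sum (fun _ _ => zero_le) (Finset.mem_univ l)).trans hp
  have hden : ∑ l, ((roundDown M (p l) : ℝ≥0∞) + 1) ≤ M + Fintype.card T := by
    calc ∑ l, ((roundDown M (p l) : ℝ≥0∞) + 1) ≤ ∑ l, (p l * M + 1) := by
          gcongr with l
          exact roundDown_le ((hp1 l).trans_lt ENNReal.one_lt_top).ne
      _ = (∑ l, p l) * M + Fintype.card T := by simp [Finset.sum_add_distrib, Finset.sum_mul]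
      _ ≤ M + Fintype.card T := by
          gcongr
          exact mul_le_of_le_one_left' hp
  rw [← mul_div_assoc]
  exact ENNReal.div_le_div (le_roundDown_add_one (hp1 t)) hden

lemma tendsto_codeLen_div_add (n : ℕ) :
    Tendsto (fun M : ℕ => codeLen (M / (M + n))) atTop (𝓝 0) := by
  rw [← codeLen_one]
  refine (continuous_codeLen.tendsto 1).comp ?_
  have hreal : Tendsto (fun M : ℕ => (M / (M + n) : ℝ)) atTop (𝓝 1) :=
    tendsto_natCast_div_add_atTop (n : ℝ)
  rw [← ENNReal.ofReal_one]
  refine (ENNReal.tendsto_ofReal hreal).congr' ?_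
  filter_upwards [eventually_gt_atTop 0] with M hM
  have : (0 : ℝ) < M := by exact_mod_cast hM
  rw [ENNReal.ofReal_div_of_pos (by positivity), ENNReal.ofReal_add (by positivity) (by positivity)]
  simp

lemma exists_kernel_lintegral_codeLen_lt (hm : m ≤ mX) [IsProbabilityMeasure μ] [Fintype T]
    {a : X → T} (ha : LabelMeasurable mX a) {c : ℝ≥0∞}
    (hc : condEnt m μ (fun t => a ⁻¹' {t}) < c) :
    ∃ (M : ℕ) (ρ : X → T → Fin (M + 1)) (q : (T → Fin (M + 1)) → T → ℝ≥0∞),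
      LabelMeasurable m ρ ∧ (∀ r, IsPosSubprob (q r)) ∧
      ∫⁻ x, codeLen (q (ρ x) (a x)) ∂μ < c := by
  rw [condEnt_eq_lintegral_codeLen hm ha] at hc
  have hlim := (tendsto_codeLen_div_add (Fintype.card T)).const_add
    (∫⁻ x, codeLen (condProb m μ (a ⁻¹' {a x}) x) ∂μ)
  rw [add_zero] at hlim
  obtain ⟨M, hM⟩ := (hlim.eventually (gt_mem_nhds hc)).exists
  refine ⟨M, fun x t => roundDown M (condProb m μ (a ⁻¹' {t}) x), smoothedVector,
    .pi fun t => .of_singletons fun i =>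
      (measurable_roundDown M).comp (measurable_condProb _) (measurableSet_singleton i),
    isPosSubprob_smoothedVector, lt_of_le_of_lt ?_ hM⟩
  calc ∫⁻ x, codeLen (smoothedVector (fun t => roundDown M (condProb m μ (a ⁻¹' {t}) x)) (a x)) ∂μ
      ≤ ∫⁻ x, (codeLen (condProb m μ (a ⁻¹' {a x}) x) + codeLen (M / (M + Fintype.card T))) ∂μ := by
        refine lintegral_mono_ae ?_
        filter_upwards [sum_condProb_le_one hm ha] with x hx
        exact (codeLen_antitone (mul_le_smoothedVector hx (a x))).trans (codeLen_mul_le _ _)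
    _ = _ := by
        rw [lintegral_add_right _ measurable_const, lintegral_const, measure_univ, mul_one]

end FiniteKernel

/-! ### Code weights -/

section CodeWeights

lemma codeLen_rpow (p : ℝ≥0∞) {y : ℝ} (hy : 0 ≤ y) :
    codeLen (p ^ y) = ENNReal.ofReal y * codeLen p := by
  rw [codeLen, ENNReal.log_rpow, ← mul_neg, EReal.toENNReal_mul (EReal.coe_nonneg.2 hy),
    EReal.real_coe_toENNReal, codeLen]

/-- The probability vector on `ℕ` with weights proportional to `(n + 1) ^ (-(1 + κ))`. Describing
`n` with it costs about `(1 + κ) * log (n + 1)`. -/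
noncomputable def zetaWeight (κ : ℝ≥0) (n : ℕ) : ℝ≥0∞ :=
  ((n : ℝ≥0∞) + 1) ^ (-(1 + κ : ℝ)) / ∑' k : ℕ, ((k : ℝ≥0∞) + 1) ^ (-(1 + κ : ℝ))

lemma tsum_natCast_add_one_rpow_ne_top {κ : ℝ≥0} (hκ : 0 < κ) :
    ∑' k : ℕ, ((k : ℝ≥0∞) + 1) ^ (-(1 + κ : ℝ)) ≠ ⊤ := by
  have hsum : Summable fun k : ℕ => ((k + 1 : ℕ) : ℝ≥0) ^ (-(1 + κ : ℝ)) :=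
    NNReal.summable_comp_injective (NNReal.summable_rpow.2 (by simpa using hκ))
      (add_left_injective 1)
  have hcoe (k : ℕ) : ((k : ℝ≥0∞) + 1) ^ (-(1 + κ : ℝ)) =
      (((k + 1 : ℕ) : ℝ≥0) ^ (-(1 + κ : ℝ)) : ℝ≥0) := by
    rw [ENNReal.coe_rpow_of_ne_zero (by positivity)]
    push_cast
    rfl
  simp_rw [hcoe]
  exact ENNReal.tsum_coe_ne_top_iff_summable.2 hsum

lemma tsum_zetaWeight_le_one (κ : ℝ≥0) : ∑' n, zetaWeight κ n ≤ 1 := by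
  simp only [zetaWeight, div_eq_mul_inv]
  rw [ENNReal.tsum_mul_right]
  exact ENNReal.mul_inv_le_one _

lemma zetaWeight_zero_ne_zero {κ : ℝ≥0} (hκ : 0 < κ) : zetaWeight κ 0 ≠ 0 := by
  simpa [zetaWeight] using tsum_natCast_add_one_rpow_ne_top hκ

lemma codeLen_zetaWeight_le (κ : ℝ≥0) {n : ℕ} {p : ℝ≥0∞} (hn : (n + 1) * p ≤ 1) :
    codeLen (zetaWeight κ n) ≤ (1 + κ) * codeLen p + codeLen (zetaWeight κ 0) := by
  have hfac : zetaWeight κ n = ((n : ℝ≥0∞) + 1) ^ (-(1 + κ : ℝ)) * zetaWeight κ 0 := by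
    simp [zetaWeight, div_eq_mul_inv]
  have hp : p ^ (1 + κ : ℝ) ≤ ((n : ℝ≥0∞) + 1) ^ (-(1 + κ : ℝ)) := by
    rw [ENNReal.rpow_neg, ← ENNReal.inv_rpow]
    refine ENNReal.rpow_le_rpow ?_ (by positivity)
    rwa [ENNReal.le_inv_iff_mul_le, mul_comm]
  have hκ : ENNReal.ofReal (1 + κ : ℝ) = 1 + κ := by
    rw [ENNReal.ofReal_add zero_le_one κ.coe_nonneg, ENNReal.ofReal_one, ENNReal.ofReal_coe_nnreal]
  calc codeLen (zetaWeight κ n)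
      ≤ codeLen (((n : ℝ≥0∞) + 1) ^ (-(1 + κ : ℝ))) + codeLen (zetaWeight κ 0) :=
        hfac ▸ codeLen_mul_le _ _
    _ ≤ codeLen (p ^ (1 + κ : ℝ)) + codeLen (zetaWeight κ 0) := by
        gcongr
        exact codeLen_antitone hp
    _ = (1 + κ) * codeLen p + codeLen (zetaWeight κ 0) := by
        rw [codeLen_rpow _ (by positivity), hκ]

/-- The vector on `Option R` giving weight `1 - δ` to `none` and sharing `δ` equally among the
elements of `R`. -/
noncomputable def optionWeight (R : Type*) (δ : ℝ≥0∞) (o : Option R) : ℝ≥0∞ :=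
  o.elim (1 - δ) fun _ => δ / Nat.card R

lemma sum_optionWeight_le_one {R : Type*} [Fintype R] {δ : ℝ≥0∞} (hδ : δ ≤ 1) :
    ∑ o, optionWeight R δ o ≤ 1 := by
  rw [Fintype.sum_option]
  calc 1 - δ + ∑ _ : R, δ / Nat.card R ≤ 1 - δ + δ := by
        gcongr
        simpa using ENNReal.mul_div_le
    _ = 1 := tsub_add_cancel_of_le hδ

/-- The weight of one letter of a partially defined word: a letter is described with `q` where the
context is known, and is absent where the context is absent. -/
def letterWeight {S A : Type*} (q : S → A → ℝ≥0∞) : Option S → Option A → ℝ≥0∞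
  | none, none => 1
  | some j, some i => q j i
  | _, _ => 0

lemma exists_rank_code {W : Type*} [Fintype W] (p : W → ℝ≥0∞) (hp : ∑ w, p w ≤ 1) :
    ∃ N : W → ℕ, Injective N ∧ ∀ w, (N w + 1) * p w ≤ 1 := by
  let p' : Fin (Fintype.card W) → ℝ≥0∞ᵒᵈ := fun i =>
    OrderDual.toDual (p ((Fintype.equivFin W).symm i))
  let e : W ≃ Fin (Fintype.card W) := (Fintype.equivFin W).trans (Tuple.sort p').symm
  have hanti : Antitone (p ∘ e.symm) := fun i j hij => Tuple.monotone_sort p' hij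
  refine ⟨fun w => e w, Fin.val_injective.comp e.injective, fun w => ?_⟩
  calc ((e w : ℕ) + 1) * p w = ∑ _i ∈ Finset.Iic (e w), p w := by
        simp
    _ ≤ ∑ i ∈ Finset.Iic (e w), p (e.symm i) := by
        refine Finset.sum_le_sum fun i hi => ?_
        simpa using hanti (Finset.mem_Iic.1 hi)
    _ ≤ ∑ i, p (e.symm i) := Finset.sum_le_univ_sum_of_nonneg fun _ => zero_le
    _ ≤ 1 := (e.symm.sum_comp p).trans_le hp

lemma exists_word_code {S A : Type*} [Fintype A] {q : S → A → ℝ≥0∞}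
    (hq : ∀ j, IsPosSubprob (q j)) (K : ℕ) :
    ∃ N : (Fin K → Option S) → (Fin K → Option A) → ℕ, (∀ s, Injective (N s)) ∧
      ∀ s w, (N s w + 1) * ∏ k, letterWeight q (s k) (w k) ≤ 1 := by
  classical
  have hsum (s : Fin K → Option S) :
      ∑ w : Fin K → Option A, ∏ k, letterWeight q (s k) (w k) ≤ 1 := by
    rw [← Fintype.piFinset_univ, ← Finset.prod_univ_sum]
    refine Finset.prod_le_one' fun k _ => ?_
    rw [Fintype.sum_option]
    cases s k with
    | none => simp [letterWeight]
    | some j => simpa [letterWeight] using (hq j).sum_le_one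
  choose N hinj hN using fun s => exists_rank_code _ (hsum s)
  exact ⟨N, hinj, hN⟩

end CodeWeights

/-! ### Invariant σ-algebras -/

section InvariantAlgebras

variable {G X : Type*} [Group G] [MulAction G X]

lemma InvariantAlg.sup {M N : MeasurableSpace X} (hM : InvariantAlg G M) (hN : InvariantAlg G N) :
    InvariantAlg G (M ⊔ N) := by
  intro g
  have : (M ⊔ N).comap (fun x : X => g • x) ≤ M ⊔ N := by
    rw [MeasurableSpace.comap_sup]
    refine sup_le_sup ?_ ?_
    · rintro _ ⟨A, hA, rfl⟩
      exact hM g A hA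
    · rintro _ ⟨A, hA, rfl⟩
      exact hN g A hA
  exact fun A hA => this _ ⟨A, hA, rfl⟩

lemma invariantAlg_generateFrom {ξ : Set (Set X)}
    (h : ∀ g : G, ∀ A ∈ ξ, MeasurableSet[.generateFrom ξ] ((fun x => g • x) ⁻¹' A)) :
    InvariantAlg G (.generateFrom ξ) := by
  intro g A hA
  exact @measurable_generateFrom X X (.generateFrom ξ) ξ _ (h g) A hA

lemma invariantAlg_sigmaG (ξ : Set (Set X)) : InvariantAlg G (sigmaG G ξ) := by
  refine invariantAlg_generateFrom ?_
  rintro g _ ⟨h, A, hA, rfl⟩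
  refine MeasurableSpace.measurableSet_generateFrom ⟨h * g, A, hA, ?_⟩
  simp [preimage_preimage, mul_smul]

lemma measurableSet_sigmaG {ξ : Set (Set X)} {A : Set X} (hA : A ∈ ξ) :
    MeasurableSet[sigmaG G ξ] A :=
  MeasurableSpace.measurableSet_generateFrom ⟨1, A, hA, by simp⟩

lemma LabelMeasurable.smul {T : Type*} {M : MeasurableSpace X} {f : X → T}
    (hf : LabelMeasurable M f) (hM : InvariantAlg G M) (g : G) :
    LabelMeasurable M fun x => f (g • x) :=
  fun s => hM g _ (hf s)

variable [mX : MeasurableSpace X]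

lemma invSigma_le : invSigma G X ≤ mX := MeasurableSpace.generateFrom_le fun _ h => h.1

lemma measurableSet_invSigma {A : Set X} (hA : MeasurableSet A)
    (h : ∀ g : G, (fun x => g • x) ⁻¹' A = A) : MeasurableSet[invSigma G X] A :=
  MeasurableSpace.measurableSet_generateFrom ⟨hA, h⟩

lemma invariantAlg_invSigma : InvariantAlg G (invSigma G X) := by
  refine invariantAlg_generateFrom fun g A hA => ?_
  rw [hA.2 g]
  exact MeasurableSpace.measurableSet_generateFrom hA

end InvariantAlgebras

/-! ### Partitions from labellings -/

lemma exists_isPartition_condEnt_le {X T : Type*} {m : MeasurableSpace X} [mX : MeasurableSpace X]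
    (hm : m ≤ mX) (μ : Measure X) [IsFiniteMeasure μ] [Countable T] {b : X → T}
    (hb : LabelMeasurable mX b) :
    ∃ β : ℕ → Set X, IsPartition β ∧
      (∀ M : MeasurableSpace X, (∀ i, MeasurableSet[M] (β i)) → LabelMeasurable M b) ∧
      condEnt m μ β ≤ condEnt m μ fun t => b ⁻¹' {t} := by
  obtain ⟨e, he⟩ := exists_injective_nat T
  refine ⟨fun i => (fun x => e (b x)) ⁻¹' {i}, ⟨fun i => hb.comp e _, ?_, ?_⟩,
    fun M hM => .of_singletons fun t => ?_, condEnt_comp_le hm hb e⟩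
  · exact fun i j hij => (disjoint_singleton.2 hij).preimage _
  · exact eq_univ_of_forall fun x => mem_iUnion.2 ⟨e (b x), rfl⟩
  · convert hM (e t) using 1
    ext x
    simp [he.eq_iff]

/-! ### Coding along markers -/

section Markers

variable {G X : Type*} [Group G] [MulAction G X] {M : MeasurableSpace X} {V : Set X}

/-- The union of the orbits that meet `V`. -/
def saturation (G : Type*) {X : Type*} [Group G] [MulAction G X] (V : Set X) : Set X :=
  {x | ∃ g : G, g • x ∈ V}

lemma saturation_eq_iUnion (V : Set X) :
    saturation G V = ⋃ g : G, (fun x => g • x) ⁻¹' V := by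
  ext x
  simp [saturation]

lemma measurableSet_saturation [Countable G] (hM : InvariantAlg G M) (hV : MeasurableSet[M] V) :
    MeasurableSet[M] (saturation G V) := by
  rw [saturation_eq_iUnion]
  exact MeasurableSet.iUnion fun g => hM g V hV

lemma preimage_smul_saturation (g : G) (V : Set X) :
    (fun x => g • x) ⁻¹' saturation G V = saturation G V := by
  ext x
  refine ⟨fun ⟨h, hx⟩ => ⟨h * g, by rwa [mul_smul]⟩, fun ⟨h, hx⟩ => ⟨h * g⁻¹, ?_⟩⟩
  simpa [mul_smul] using hx

lemma saturation_mono {W : Set X} (h : V ⊆ W) : saturation G V ⊆ saturation G W :=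
  fun _ ⟨g, hg⟩ => ⟨g, h hg⟩

/-- The points whose first marker, in the enumeration `g` of the group and for the marker set `V`,
is met at time `k`. -/
def firstHit (g : ℕ → G) (V : Set X) (k : ℕ) : Set X :=
  disjointed (fun k => (fun x => g k • x) ⁻¹' V) k

/-- The points that meet a marker before time `K`. -/
def hitBefore (g : ℕ → G) (V : Set X) (K : ℕ) : Set X :=
  ⋃ k : Fin K, firstHit g V k

lemma smul_mem_of_mem_firstHit {g : ℕ → G} {k : ℕ} {x : X} (hx : x ∈ firstHit g V k) :
    g k • x ∈ V :=
  disjointed_subset _ _ hx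

lemma measurableSet_firstHit (hM : InvariantAlg G M) (hV : MeasurableSet[M] V) (g : ℕ → G)
    (k : ℕ) : MeasurableSet[M] (firstHit g V k) :=
  MeasurableSet.disjointed (fun k => hM (g k) V hV) k

lemma measurableSet_hitBefore (hM : InvariantAlg G M) (hV : MeasurableSet[M] V) (g : ℕ → G)
    (K : ℕ) : MeasurableSet[M] (hitBefore g V K) :=
  MeasurableSet.iUnion fun k => measurableSet_firstHit hM hV g k

lemma iUnion_firstHit {g : ℕ → G} (hg : Surjective g) (V : Set X) :
    ⋃ k, firstHit g V k = saturation G V := by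
  rw [saturation_eq_iUnion, ← hg.iUnion_comp]
  exact iUnion_disjointed

lemma hitBefore_subset_saturation (g : ℕ → G) (V : Set X) (K : ℕ) :
    hitBefore g V K ⊆ saturation G V :=
  iUnion_subset fun k _ hx => ⟨g k, smul_mem_of_mem_firstHit hx⟩

lemma hitBefore_mono (g : ℕ → G) (V : Set X) : Monotone (hitBefore g V) := fun _ _ h =>
  iUnion_subset fun k => subset_iUnion_of_subset (k.castLE h) subset_rfl

lemma iUnion_hitBefore {g : ℕ → G} (hg : Surjective g) (V : Set X) :
    ⋃ K, hitBefore g V K = saturation G V :=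
  (iUnion_subset fun K => hitBefore_subset_saturation g V K).antisymm <| by
    rw [← iUnion_firstHit hg]
    exact iUnion_subset fun k => subset_iUnion_of_subset (k + 1) <|
      subset_iUnion_of_subset (Fin.last k) subset_rfl

open Classical in
/-- The word that a marker at `x` collects: its `k`-th letter is the label of the unique point that
meets its first marker at time `k` and whose marker is `x`, if there is such a point. -/
noncomputable def gather {B : Type*} (g : ℕ → G) (V : Set X) (K : ℕ) (f : X → B) (x : X) :
    Fin K → Option B :=
  fun k => if (g k)⁻¹ • x ∈ firstHit g V k then some (f ((g k)⁻¹ • x)) else none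

open Classical in
/-- The label of `x` if no marker has collected it before time `K`. -/
noncomputable def residualLabel {B : Type*} (g : ℕ → G) (V : Set X) (K : ℕ) (f : X → B) (x : X) :
    Option B :=
  if x ∈ hitBefore g V K then none else some (f x)

open Classical in
/-- The code number attached to `x`: if `x` is a marker, the code of the word it collects from `a`
relative to the word it collects from `σ`, and `0` otherwise. -/
noncomputable def markerCode {S A : Type*} (g : ℕ → G) (V : Set X) {K : ℕ}
    (N : (Fin K → Option S) → (Fin K → Option A) → ℕ) (σ : X → S) (a : X → A) (x : X) : ℕ :=
  if x ∈ V then N (gather g V K σ x) (gather g V K a x) else 0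

open Classical in
lemma LabelMeasurable.ite {T : Type*} {f f' : X → T} (hV : MeasurableSet[M] V)
    (hf : LabelMeasurable M f) (hf' : LabelMeasurable M f') :
    LabelMeasurable M fun x => if x ∈ V then f x else f' x := fun s => by
  rw [show (fun x => if x ∈ V then f x else f' x) ⁻¹' s = V.ite (f ⁻¹' s) (f' ⁻¹' s) by
    ext x; by_cases hx : x ∈ V <;> simp [Set.ite, hx]]
  exact hV.ite (hf s) (hf' s)

lemma labelMeasurable_gather {B : Type*} [Countable B] {f : X → B} (hf : LabelMeasurable M f)
    (hM : InvariantAlg G M) (hV : MeasurableSet[M] V) (g : ℕ → G) (K : ℕ) :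
    LabelMeasurable M (gather g V K f) :=
  .pi fun k => (LabelMeasurable.ite (measurableSet_firstHit hM hV g k) (hf.comp some)
    fun _ => .const _).smul hM (g k)⁻¹

lemma labelMeasurable_residualLabel {B : Type*} {f : X → B} (hf : LabelMeasurable M f)
    (hM : InvariantAlg G M) (hV : MeasurableSet[M] V) (g : ℕ → G) (K : ℕ) :
    LabelMeasurable M (residualLabel g V K f) :=
  .ite (measurableSet_hitBefore hM hV g K) (fun _ => .const _) (hf.comp some)

lemma labelMeasurable_markerCode {S A : Type*} [Countable S] [Countable A] {σ : X → S} {a : X → A}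
    (hσ : LabelMeasurable M σ) (ha : LabelMeasurable M a) (hM : InvariantAlg G M)
    (hV : MeasurableSet[M] V) (g : ℕ → G) {K : ℕ}
    (N : (Fin K → Option S) → (Fin K → Option A) → ℕ) :
    LabelMeasurable M (markerCode g V N σ a) :=
  .ite hV (((labelMeasurable_gather hσ hM hV g K).prodMk
    (labelMeasurable_gather ha hM hV g K)).comp fun p => N p.1 p.2)
    fun _ => .const _

lemma gather_smul {B : Type*} {g : ℕ → G} {K : ℕ} (f : X → B) {k : Fin K} {x : X}
    (hx : x ∈ firstHit g V k) : gather g V K f (g k • x) k = some (f x) := by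
  simp [gather, hx]

lemma labelMeasurable_of_markerCode {S A : Type*} [Countable S] [Countable A] {g : ℕ → G} {K : ℕ}
    {N : (Fin K → Option S) → (Fin K → Option A) → ℕ} (hN : ∀ s, Injective (N s)) {σ : X → S}
    {a : X → A} (hM : InvariantAlg G M) (hV : MeasurableSet[M] V) (hσ : LabelMeasurable M σ)
    (hcode : LabelMeasurable M (markerCode g V N σ a))
    (hres : LabelMeasurable M (residualLabel g V K a)) : LabelMeasurable M a := by
  refine .of_singletons fun i => ?_
  let decodes (k : Fin K) : Set X :=
    {y | ∃ w, N (gather g V K σ y) w = markerCode g V N σ a y ∧ w k = some i}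
  have hdecodes (k : Fin K) : MeasurableSet[M] (decodes k) :=
    ((labelMeasurable_gather hσ hM hV g K).prodMk hcode) {p | ∃ w, N p.1 w = p.2 ∧ w k = some i}
  have hiff (k : Fin K) {x : X} (hx : x ∈ firstHit g V k) : g k • x ∈ decodes k ↔ a x = i := by
    simp only [decodes, mem_ofPred_eq, markerCode, smul_mem_of_mem_firstHit hx, if_true,
      (hN _).eq_iff, exists_eq_left, gather_smul a hx, Option.some_inj]
  have hsplit : a ⁻¹' {i} = residualLabel g V K a ⁻¹' {some i} ∪
      ⋃ k : Fin K, firstHit g V k ∩ (fun x => g k • x) ⁻¹' decodes k := by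
    ext x
    by_cases hx : x ∈ hitBefore g V K
    · obtain ⟨k, hk⟩ := mem_iUnion.1 hx
      simp only [mem_preimage, mem_singleton_iff, mem_union, residualLabel, hx, if_true,
        reduceCtorEq, false_or, mem_iUnion, mem_inter_iff]
      exact ⟨fun h => ⟨k, hk, (hiff k hk).2 h⟩, fun ⟨k, hk, h⟩ => (hiff k hk).1 h⟩
    · have hx' (k : Fin K) : x ∉ firstHit g V k := fun hk => hx (mem_iUnion.2 ⟨k, hk⟩)
      simp [residualLabel, hx, hx']
  rw [hsplit]
  exact (hres _).union <| MeasurableSet.iUnion fun k =>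
    (measurableSet_firstHit hM hV g k).inter (hM _ _ (hdecodes k))

end Markers

section CodeCosts

variable {X Z S A : Type*}

lemma codeLen_prod_le {ι : Type*} (s : Finset ι) (p : ι → ℝ≥0∞) :
    codeLen (∏ i ∈ s, p i) ≤ ∑ i ∈ s, codeLen (p i) := by
  induction s using Finset.cons_induction with
  | empty => simp [codeLen_one]
  | cons i s hi ih =>
    rw [Finset.prod_cons, Finset.sum_cons]
    exact (codeLen_mul_le _ _).trans (by gcongr)

open Classical in
/-- The weights used for the number attached to a point with marker label `i`, where `z0` is the
label of the points that are not markers. -/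
noncomputable def markerWeight (κ : ℝ≥0) (z0 i : Z) (n : ℕ) : ℝ≥0∞ :=
  if i = z0 then Pi.single (M := fun _ => ℝ≥0∞) 0 1 n else zetaWeight κ n

lemma tsum_markerWeight_le_one (κ : ℝ≥0) (z0 i : Z) : ∑' n, markerWeight κ z0 i n ≤ 1 := by
  by_cases hi : i = z0
  · simp [markerWeight, hi]
  · simpa [markerWeight, hi] using tsum_zetaWeight_le_one κ

/-- The weights used for the residual label, in the context `some j` off the marked orbits, where
the label is always present, and in the context `none` on them, where it is rarely present. -/
noncomputable def residualWeight (δ : ℝ≥0∞) (q : S → A → ℝ≥0∞) : Option S → Option A → ℝ≥0∞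
  | none => optionWeight A δ
  | some j => fun o => o.elim 0 (q j)

lemma tsum_residualWeight_le_one [Fintype A] {δ : ℝ≥0∞} (hδ : δ ≤ 1) {q : S → A → ℝ≥0∞}
    (hq : ∀ j, IsPosSubprob (q j)) (t : Option S) : ∑' o, residualWeight δ q t o ≤ 1 := by
  rw [tsum_fintype]
  cases t with
  | none => exact sum_optionWeight_le_one hδ
  | some j => simpa [residualWeight, Fintype.sum_option] using (hq j).sum_le_one

variable {G : Type*} [Group G] [MulAction G X]

lemma codeLen_letterWeight_gather (g : ℕ → G) (V : Set X) {K : ℕ} (σ : X → S) (a : X → A)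
    (q : S → A → ℝ≥0∞) (k : Fin K) (x : X) :
    codeLen (letterWeight q (gather g V K σ x k) (gather g V K a x k)) =
      (firstHit g V k).indicator (fun y => codeLen (q (σ y) (a y))) ((g k)⁻¹ • x) := by
  by_cases hx : (g k)⁻¹ • x ∈ firstHit g V k
  · simp [gather, letterWeight, hx]
  · simp [gather, letterWeight, hx, codeLen_one]

lemma codeLen_markerWeight_le {g : ℕ → G} {K : ℕ}
    {N : (Fin K → Option S) → (Fin K → Option A) → ℕ} {q : S → A → ℝ≥0∞}
    (hN : ∀ s w, (N s w + 1) * ∏ k, letterWeight q (s k) (w k) ≤ 1) (κ : ℝ≥0) (z : X → Z) (z0 : Z)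
    (σ : X → S) (a : X → A) (x : X) :
    codeLen (markerWeight κ z0 (z x) (markerCode g {y | z y ≠ z0} N σ a x)) ≤
      {y | z y ≠ z0}.indicator (fun _ => codeLen (zetaWeight κ 0)) x +
        (1 + κ) * ∑ k : Fin K, (firstHit g {y | z y ≠ z0} k).indicator
          (fun y => codeLen (q (σ y) (a y))) ((g k)⁻¹ • x) := by
  by_cases hx : z x = z0
  · simp [markerWeight, markerCode, hx, codeLen_one]
  simp only [markerWeight, markerCode, hx, mem_ofPred_eq, not_false_eq_true, ne_eq, if_true,
    if_false, indicator_of_mem]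
  refine (codeLen_zetaWeight_le κ (hN _ _)).trans ?_
  rw [add_comm]
  gcongr
  refine (codeLen_prod_le _ _).trans_eq ?_
  exact Finset.sum_congr rfl fun k _ => codeLen_letterWeight_gather g _ σ a q k x

open Classical in
lemma codeLen_residualWeight_le (g : ℕ → G) (V : Set X) (K : ℕ) (δ : ℝ≥0∞) (σ : X → S)
    (a : X → A) (q : S → A → ℝ≥0∞) (x : X) :
    codeLen (residualWeight δ q (if x ∈ saturation G V then none else some (σ x))
        (residualLabel g V K a x)) ≤
      (saturation G V)ᶜ.indicator (fun y => codeLen (q (σ y) (a y))) x + (codeLen (1 - δ) +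
        (saturation G V \ hitBefore g V K).indicator (fun _ => codeLen (δ / Nat.card A)) x) := by
  by_cases hx : x ∈ hitBefore g V K
  · simp [residualLabel, residualWeight, optionWeight, hx, hitBefore_subset_saturation g V K hx]
  by_cases hxD : x ∈ saturation G V
  · simp [residualLabel, residualWeight, optionWeight, hx, hxD]
  · simp [residualLabel, residualWeight, hx, hxD]

/-- The labels `z` placed at the marker set `V` determine `σ`: relative to the invariant
σ-algebra `m`, the labelling `σ` can be computed from `z` by the group action, and off the marked
orbits `σ` is already `m`-measurable. -/
structure MarkerDetermines (G : Type*) {X Z S : Type*} [Group G] [MulAction G X]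
    (m : MeasurableSpace X) (V : Set X) (z : X → Z) (σ : X → S) : Prop where
  determined : ∀ M : MeasurableSpace X, InvariantAlg G M → m ≤ M → LabelMeasurable M z →
    LabelMeasurable M σ
  off_orbits : ∀ j, MeasurableSet[m] (σ ⁻¹' {j} \ saturation G V)

open Classical in
lemma MarkerDetermines.labelMeasurable_off_orbits [Countable S] {m : MeasurableSpace X}
    {V : Set X} {z : X → Z}
    {σ : X → S} (hσ : MarkerDetermines G m V z σ) (hD : MeasurableSet[m] (saturation G V)) :
    LabelMeasurable m fun x => if x ∈ saturation G V then none else some (σ x) := by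
  refine .of_singletons fun t => ?_
  cases t with
  | none => simpa [preimage] using hD
  | some j =>
    convert hσ.off_orbits j using 1
    ext x
    by_cases hx : x ∈ saturation G V <;> simp [hx]

end CodeCosts

section CodingTheorem

variable {G X Z T R S A : Type*} [Group G] [MulAction G X] {m : MeasurableSpace X}
  [mX : MeasurableSpace X] {μ : Measure X}

lemma condEnt_prodMk_le [Countable Z] [Countable R] (hm : m ≤ mX) [IsProbabilityMeasure μ]
    {z : X → Z} {n : X → ℕ} {o : X → R} {τ : X → T} (hz : LabelMeasurable mX z)
    (hn : LabelMeasurable mX n) (ho : LabelMeasurable mX o) (hτ : LabelMeasurable m τ)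
    {qz : Z → ℝ≥0∞} {qn : Z → ℕ → ℝ≥0∞} {qo : T → R → ℝ≥0∞} (hqz : ∑' i, qz i ≤ 1)
    (hqn : ∀ i, ∑' k, qn i k ≤ 1) (hqo : ∀ t, ∑' r, qo t r ≤ 1) :
    condEnt m μ (fun t => (fun x => (z x, n x, o x)) ⁻¹' {t}) ≤
      ∫⁻ x, (codeLen (qz (z x)) + codeLen (qn (z x) (n x)) + codeLen (qo (τ x) (o x))) ∂μ := by
  have hsum (x : X) : ∑' t : Z × ℕ × R, qz t.1 * qn t.1 t.2.1 * qo (τ x) t.2.2 ≤ 1 := by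
    calc ∑' t : Z × ℕ × R, qz t.1 * qn t.1 t.2.1 * qo (τ x) t.2.2
        = ∑' i, qz i * ∑' k, qn i k * ∑' r, qo (τ x) r := by
          simp only [ENNReal.tsum_prod', mul_assoc, ENNReal.tsum_mul_left]
      _ ≤ ∑' i, qz i * ∑' k, qn i k * 1 := by
          gcongr
          exact hqo _
      _ ≤ ∑' i, qz i * 1 := by
          gcongr with i
          simpa using hqn i
      _ ≤ 1 := by simpa using hqz
  refine (condEnt_le_lintegral_codeLen hm (hz.prodMk (hn.prodMk ho))
    (fun t => ((hτ.comp fun j => qo j t.2.2).measurable).const_mul _) hsum).trans ?_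
  refine lintegral_mono fun x => (codeLen_mul_le _ _).trans ?_
  gcongr
  exact codeLen_mul_le _ _

variable (A) in
lemma exists_residual_cost_lt [IsFiniteMeasure μ] {D : Set X} {H : ℕ → Set X}
    (hH : Monotone H) (hHm : ∀ K, MeasurableSet (H K)) (hHD : ⋃ K, H K = D) {ε : ℝ≥0∞}
    (hε : 0 < ε) :
    ∃ δ ≤ 1, ∃ K, codeLen (1 - δ) + codeLen (δ / Nat.card A) * μ (D \ H K) < ε := by
  have hδ : Tendsto (fun δ : ℝ≥0∞ => codeLen (1 - δ)) (𝓝[>] 0) (𝓝 0) := by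
    have := (continuous_codeLen.comp
      (ENNReal.continuous_sub_left ENNReal.one_ne_top)).tendsto 0
    simpa [comp_def, codeLen_one] using this.mono_left nhdsWithin_le_nhds
  obtain ⟨δ, hδε, hδ0, hδ1⟩ := ((hδ.eventually (gt_mem_nhds hε)).and
    (Ioc_mem_nhdsGT zero_lt_one)).exists
  have hC : codeLen (δ / Nat.card A) ≠ ⊤ := codeLen_ne_top
    (ENNReal.div_ne_zero.2 ⟨hδ0.ne', ENNReal.natCast_ne_top _⟩)
  have hlim : Tendsto (fun K => μ (D \ H K)) atTop (𝓝 0) := by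
    have := tendsto_measure_iInter_atTop (μ := μ) (s := fun K => D \ H K)
      (fun K => ((hHD ▸ MeasurableSet.iUnion hHm).diff (hHm K)).nullMeasurableSet)
      (fun i j hij => sdiff_subset_sdiff_right (hH hij)) ⟨0, measure_ne_top _ _⟩
    rwa [← sdiff_iUnion, hHD, Set.sdiff_self, measure_empty] at this
  have hlim' := (ENNReal.Tendsto.const_mul hlim (Or.inr hC)).const_add (codeLen (1 - δ))
  rw [mul_zero, add_zero] at hlim'
  obtain ⟨K, hK⟩ := (hlim'.eventually (gt_mem_nhds hδε)).exists
  exact ⟨δ, hδ1, K, hK⟩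

lemma sum_lintegral_indicator_firstHit_le (hμ : IsPmp G μ) {V : Set X} (hV : MeasurableSet V)
    (g : ℕ → G) (K : ℕ) {c : X → ℝ≥0∞} (hc : Measurable c) :
    ∑ k : Fin K, ∫⁻ x, (firstHit g V k).indicator c ((g k)⁻¹ • x) ∂μ ≤
      ∫⁻ x in saturation G V, c x ∂μ := by
  have hF (k : ℕ) : MeasurableSet (firstHit g V k) :=
    measurableSet_firstHit (fun h _ hA => (hμ h).measurable hA) hV g k
  have hdisj : Pairwise (Disjoint on fun k : Fin K => firstHit g V k) := fun i j hij =>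
    disjoint_disjointed _ (Fin.val_injective.ne hij)
  calc ∑ k : Fin K, ∫⁻ x, (firstHit g V k).indicator c ((g k)⁻¹ • x) ∂μ
      = ∑ k : Fin K, ∫⁻ x in firstHit g V k, c x ∂μ := by
        refine Finset.sum_congr rfl fun k _ => ?_
        rw [(hμ (g k)⁻¹).lintegral_comp (hc.indicator (hF k)), lintegral_indicator (hF k)]
    _ = ∫⁻ x in hitBefore g V K, c x ∂μ := by
        rw [hitBefore, lintegral_iUnion (fun k : Fin K => hF k) hdisj, tsum_fintype]
    _ ≤ ∫⁻ x in saturation G V, c x ∂μ :=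
        lintegral_mono_set (hitBefore_subset_saturation g V K)

lemma lintegral_collected_add_uncollected_le [Countable G] (hμ : IsPmp G μ) {V : Set X}
    (hV : MeasurableSet V) (g : ℕ → G) (K : ℕ) {c : X → ℝ≥0∞} (hc : Measurable c) {r : ℝ≥0∞}
    (hr : 1 ≤ r) :
    ∫⁻ x, (r * ∑ k : Fin K, (firstHit g V k).indicator c ((g k)⁻¹ • x) +
      (saturation G V)ᶜ.indicator c x) ∂μ ≤ r * ∫⁻ x, c x ∂μ := by
  have hmXG : InvariantAlg G mX := fun h _ hA => (hμ h).measurable hA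
  have hD : MeasurableSet (saturation G V) := measurableSet_saturation hmXG hV
  have hF (k : Fin K) : Measurable fun x => (firstHit g V k).indicator c ((g k)⁻¹ • x) :=
    (hc.indicator (measurableSet_firstHit hmXG hV g k)).comp (hμ _).measurable
  calc ∫⁻ x, (r * ∑ k : Fin K, (firstHit g V k).indicator c ((g k)⁻¹ • x) +
        (saturation G V)ᶜ.indicator c x) ∂μ
      = r * ∑ k : Fin K, ∫⁻ x, (firstHit g V k).indicator c ((g k)⁻¹ • x) ∂μ +
        ∫⁻ x in (saturation G V)ᶜ, c x ∂μ := by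
        rw [lintegral_add_right _ (hc.indicator hD.compl), lintegral_indicator hD.compl,
          lintegral_const_mul _ (Finset.measurable_fun_sum _ fun k _ => hF k),
          lintegral_finsetSum _ fun k _ => hF k]
    _ ≤ r * ∫⁻ x in saturation G V, c x ∂μ + r * ∫⁻ x in (saturation G V)ᶜ, c x ∂μ := by
        gcongr
        · exact sum_lintegral_indicator_firstHit_le hμ hV g K hc
        · exact le_mul_of_one_le_left zero_le hr
    _ = r * ∫⁻ x, c x ∂μ := by rw [← mul_add, lintegral_add_compl _ hD]

lemma condEnt_markerCode_le [Countable G] (hm : m ≤ mX) (hinv : invSigma G X ≤ m)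
    [IsProbabilityMeasure μ] (hμ : IsPmp G μ) [Fintype A] [Countable S] [Countable Z]
    {a : X → A} {z : X → Z} {σ : X → S} {z0 : Z} (ha : LabelMeasurable mX a)
    (hz : LabelMeasurable mX z) (hσ : MarkerDetermines G m {x | z x ≠ z0} z σ)
    {q : S → A → ℝ≥0∞} (hq : ∀ j, IsPosSubprob (q j)) {qz : Z → ℝ≥0∞} (hqz : ∑' i, qz i ≤ 1)
    (κ : ℝ≥0) (g : ℕ → G) {K : ℕ} {N : (Fin K → Option S) → (Fin K → Option A) → ℕ}
    (hN : ∀ s w, (N s w + 1) * ∏ k, letterWeight q (s k) (w k) ≤ 1) {δ : ℝ≥0∞} (hδ : δ ≤ 1) :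
    condEnt m μ (fun t => (fun x => (z x, markerCode g {x | z x ≠ z0} N σ a x,
        residualLabel g {x | z x ≠ z0} K a x)) ⁻¹' {t}) ≤
      ∫⁻ x, ((1 + κ) * codeLen (q (σ x) (a x)) + codeLen (qz (z x)) +
        {x | z x ≠ z0}.indicator (fun _ => codeLen (zetaWeight κ 0)) x) ∂μ +
      (codeLen (1 - δ) + codeLen (δ / Nat.card A) *
        μ (saturation G {x | z x ≠ z0} \ hitBefore g {x | z x ≠ z0} K)) := by
  classical
  have hmXG : InvariantAlg G mX := fun h _ hA => (hμ h).measurable hA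
  set V := {x | z x ≠ z0}
  have hV : MeasurableSet V := hz {z0}ᶜ
  have hD : MeasurableSet (saturation G V) := measurableSet_saturation hmXG hV
  have hH : MeasurableSet (hitBefore g V K) := measurableSet_hitBefore hmXG hV g K
  have hσX : LabelMeasurable mX σ := hσ.determined mX hmXG hm hz
  have hτ := hσ.labelMeasurable_off_orbits <| hinv _ <|
    measurableSet_invSigma hD fun h => preimage_smul_saturation h V
  let c (x : X) := codeLen (q (σ x) (a x))
  let residue (x : X) := codeLen (1 - δ) +
    (saturation G V \ hitBefore g V K).indicator (fun _ => codeLen (δ / Nat.card A)) x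
  have hc : Measurable c := ((hσX.prodMk ha).comp fun p => codeLen (q p.1 p.2)).measurable
  have he : Measurable fun x => codeLen (qz (z x)) +
      V.indicator (fun _ => codeLen (zetaWeight κ 0)) x :=
    (hz.comp fun i => codeLen (qz i)).measurable.add (measurable_const.indicator hV)
  have hr : Measurable residue :=
    measurable_const.add (measurable_const.indicator (hD.diff hH))
  have hcollect := lintegral_collected_add_uncollected_le hμ hV g K hc
    (le_self_add : (1 : ℝ≥0∞) ≤ 1 + κ)
  refine (condEnt_prodMk_le hm hz (labelMeasurable_markerCode hσX ha hmXG hV g N)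
    (labelMeasurable_residualLabel ha hmXG hV g K) hτ hqz (tsum_markerWeight_le_one κ z0)
    (tsum_residualWeight_le_one hδ hq)).trans ?_
  calc _ ≤ ∫⁻ x, ((codeLen (qz (z x)) + V.indicator (fun _ => codeLen (zetaWeight κ 0)) x) +
        ((1 + κ) * ∑ k : Fin K, (firstHit g V k).indicator c ((g k)⁻¹ • x) +
          (saturation G V)ᶜ.indicator c x) + residue x) ∂μ := by
        refine lintegral_mono fun x => ?_
        refine (add_le_add (add_le_add_right (codeLen_markerWeight_le hN κ z z0 σ a x) _)
          (codeLen_residualWeight_le g V K δ σ a q x)).trans_eq ?_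
        ring
    _ ≤ _ := by
        rw [lintegral_add_right _ hr, lintegral_add_left he, lintegral_add_left measurable_const,
          lintegral_indicator_const (hD.diff hH), lintegral_const, measure_univ, mul_one]
        gcongr
        rw [← lintegral_const_mul _ hc] at hcollect
        refine (add_le_add_right hcollect _).trans_eq ?_
        rw [← lintegral_add_left he]
        exact lintegral_congr fun x => by ring

theorem exists_isPartition_coding [Countable G] (hm : m ≤ mX) (hmG : InvariantAlg G m)
    (hinv : invSigma G X ≤ m) [IsProbabilityMeasure μ] (hμ : IsPmp G μ) [Fintype A] [Countable S]
    [Countable Z] {a : X → A} {z : X → Z} {σ : X → S} {z0 : Z} (ha : LabelMeasurable mX a)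
    (hz : LabelMeasurable mX z) (hσ : MarkerDetermines G m {x | z x ≠ z0} z σ)
    {q : S → A → ℝ≥0∞} (hq : ∀ j, IsPosSubprob (q j)) {qz : Z → ℝ≥0∞} (hqz : ∑' i, qz i ≤ 1)
    (κ : ℝ≥0) {ε : ℝ≥0∞} (hε : 0 < ε) :
    ∃ β : ℕ → Set X, IsPartition β ∧ LabelMeasurable (sigmaG G (range β) ⊔ m) a ∧
      LabelMeasurable (sigmaG G (range β) ⊔ m) z ∧
      condEnt m μ β ≤
        ∫⁻ x, ((1 + κ) * codeLen (q (σ x) (a x)) + codeLen (qz (z x)) +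
          {x | z x ≠ z0}.indicator (fun _ => codeLen (zetaWeight κ 0)) x) ∂μ + ε := by
  have hmXG : InvariantAlg G mX := fun h _ hA => (hμ h).measurable hA
  set V := {x | z x ≠ z0}
  have hV (M : MeasurableSpace X) (hzM : LabelMeasurable M z) : MeasurableSet[M] V := hzM {z0}ᶜ
  have hσX : LabelMeasurable mX σ := hσ.determined mX hmXG hm hz
  obtain ⟨g, hg⟩ := exists_surjective_nat G
  obtain ⟨δ, hδ, K, hK⟩ := exists_residual_cost_lt A (μ := μ) (hitBefore_mono g V)
    (measurableSet_hitBefore hmXG (hV mX hz) g) (iUnion_hitBefore hg V) hε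
  obtain ⟨N, hNinj, hN⟩ := exists_word_code hq K
  obtain ⟨β, hβ, hβmeas, hβent⟩ := exists_isPartition_condEnt_le hm μ
    (hz.prodMk ((labelMeasurable_markerCode hσX ha hmXG (hV mX hz) g N).prodMk
      (labelMeasurable_residualLabel ha hmXG (hV mX hz) g K)))
  have hcost := condEnt_markerCode_le hm hinv hμ ha hz hσ hq hqz κ g hN hδ
  set M := sigmaG G (range β) ⊔ m
  have hMG : InvariantAlg G M := (invariantAlg_sigmaG _).sup hmG
  have hb := hβmeas M fun i => le_sup_left (b := m) _ (measurableSet_sigmaG (mem_range_self i))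
  have hzM : LabelMeasurable M z := hb.comp Prod.fst
  refine ⟨β, hβ, ?_, hzM, ?_⟩
  · exact labelMeasurable_of_markerCode hNinj hMG (hV M hzM) (hσ.determined M hMG le_sup_right hzM)
      (hb.comp fun t => t.2.1) (hb.comp fun t => t.2.2)
  · exact hβent.trans (hcost.trans (by gcongr))

end CodingTheorem

/-! ### Approximation by finitely many sets -/

lemma isLocallyConstant_pi {X ι T : Type*} [TopologicalSpace X] [Finite ι] {f : ι → X → T}
    (hf : ∀ i, IsLocallyConstant (f i)) : IsLocallyConstant fun x i => f i x := by
  refine (IsLocallyConstant.iff_eventually_eq _).2 fun x => ?_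
  filter_upwards [eventually_all.2 fun i => (hf i).eventually_eq x] with y hy using funext hy

section FinitePatterns

variable {X R : Type*} {J : Finset (Set X)}

/-- The membership pattern of a point in a finite family of sets. Being a function of
`membershipPattern J` is the precise form of depending only on the sets in `J`. -/
def membershipPattern (J : Finset (Set X)) (x : X) (j : J) : Prop := x ∈ j.1

lemma membershipPattern_eq_iff {x y : X} :
    membershipPattern J x = membershipPattern J y ↔ ∀ j ∈ J, (x ∈ j ↔ y ∈ j) := by
  simp [membershipPattern, funext_iff]

lemma labelMeasurable_membershipPattern {m : MeasurableSpace X}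
    (hJ : ∀ j ∈ J, MeasurableSet[m] j) : LabelMeasurable m (membershipPattern J) :=
  .pi fun j => .of_mem_iff (hJ j j.2)

lemma isLocallyConstant_membershipPattern [TopologicalSpace X] (hJ : ∀ j ∈ J, IsClopen j) :
    IsLocallyConstant (membershipPattern J) := by
  refine isLocallyConstant_pi fun j => (IsLocallyConstant.iff_eventually_eq _).2 fun x => ?_
  by_cases hx : x ∈ j.1
  · filter_upwards [(hJ j j.2).isOpen.mem_nhds hx] with y hy using propext (iff_of_true hy hx)
  · filter_upwards [(hJ j j.2).compl.isOpen.mem_nhds hx] with y hy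
      using propext (iff_of_false hy hx)

lemma factorsThrough_membershipPattern_mono {K : Finset (Set X)} {f : X → R}
    (hf : FactorsThrough f (membershipPattern J)) (hJK : J ⊆ K) :
    FactorsThrough f (membershipPattern K) := fun _ _ hxy =>
  hf (membershipPattern_eq_iff.2 fun j hj => membershipPattern_eq_iff.1 hxy j (hJK hj))

lemma factorsThrough_membershipPattern_split {C D : Set (Set X)} {I J K : Finset (Set X)}
    (hI : (I : Set (Set X)) ⊆ C ∪ D) (hJ : ∀ s ∈ I, s ∈ C → s ∈ J) (hK : ∀ s ∈ I, s ∈ D → s ∈ K) :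
    FactorsThrough (membershipPattern I)
      fun x => (membershipPattern J x, membershipPattern K x) := by
  intro x y hxy
  obtain ⟨hx, hy⟩ := Prod.mk.inj hxy
  refine membershipPattern_eq_iff.2 fun s hs => ?_
  rcases hI hs with hsC | hsD
  · exact membershipPattern_eq_iff.1 hx s (hJ s hs hsC)
  · exact membershipPattern_eq_iff.1 hy s (hK s hs hsD)

lemma isSetRing_finitelyDetermined (Y : Set (Set X)) :
    IsSetRing {B | ∃ J : Finset (Set X), ↑J ⊆ Y ∧
      FactorsThrough (fun x => x ∈ B) (membershipPattern J)} := by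
  classical
  have hcombine {B C : Set X} {J K : Finset (Set X)} (r : Prop → Prop → Prop)
      (hB : FactorsThrough (fun x => x ∈ B) (membershipPattern J))
      (hC : FactorsThrough (fun x => x ∈ C) (membershipPattern K)) :
      FactorsThrough (fun x => r (x ∈ B) (x ∈ C)) (membershipPattern (J ∪ K)) := fun x y hxy =>
    congrArg₂ r (factorsThrough_membershipPattern_mono hB Finset.subset_union_left hxy)
      (factorsThrough_membershipPattern_mono hC Finset.subset_union_right hxy)
  refine ⟨⟨∅, by simp, fun _ _ _ => rfl⟩, ?_, ?_⟩
  · rintro B C ⟨J, hJ, hB⟩ ⟨K, hK, hC⟩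
    exact ⟨J ∪ K, by simp [hJ, hK], hcombine (· ∨ ·) hB hC⟩
  · rintro B C ⟨J, hJ, hB⟩ ⟨K, hK, hC⟩
    exact ⟨J ∪ K, by simp [hJ, hK], hcombine (· ∧ ¬ ·) hB hC⟩

variable [mX : MeasurableSpace X] (μ : Measure X) [IsFiniteMeasure μ] {Y : Set (Set X)}

lemma exists_finitelyDetermined_symmDiff_lt (hY : ∀ s ∈ Y, MeasurableSet s) {B : Set X}
    (hB : MeasurableSet[.generateFrom Y] B) {ε : ℝ≥0∞} (hε : 0 < ε) :
    ∃ (J : Finset (Set X)) (B' : Set X), ↑J ⊆ Y ∧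
      FactorsThrough (fun x => x ∈ B') (membershipPattern J) ∧ μ (B ∆ B') < ε := by
  have hle : MeasurableSpace.generateFrom Y ≤ mX := MeasurableSpace.generateFrom_le hY
  set ring := {B : Set X | ∃ J : Finset (Set X), ↑J ⊆ Y ∧
    FactorsThrough (fun x => x ∈ B) (membershipPattern J)}
  have hmeas {C : Set X} (hC : C ∈ ring) : MeasurableSet[.generateFrom Y] C := by
    obtain ⟨J, hJ, hC⟩ := hC
    obtain ⟨p, hp⟩ := (factorsThrough_iff _).1 hC
    have hpat : LabelMeasurable (.generateFrom Y) (membershipPattern J) :=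
      labelMeasurable_membershipPattern fun j hj =>
        MeasurableSpace.measurableSet_generateFrom (hJ hj)
    convert hpat {t | p t} using 1
    exact Set.ext fun x => iff_of_eq (congrFun hp x)
  have hgen : MeasurableSpace.generateFrom Y = .generateFrom ring := by
    refine le_antisymm (MeasurableSpace.generateFrom_mono fun s hs => ?_)
      (MeasurableSpace.generateFrom_le fun C hC => hmeas hC)
    refine ⟨{s}, by simpa using hs, fun x y hxy => ?_⟩
    exact propext (membershipPattern_eq_iff.1 hxy s (Finset.mem_singleton_self s))
  obtain ⟨B', hB', hlt⟩ := @exists_measure_symmDiff_lt_of_generateFrom_isSetRing _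
    (.generateFrom Y) (μ.trim hle) _ ring (isSetRing_finitelyDetermined Y)
    ⟨{univ}, countable_singleton _,
      singleton_subset_iff.2 ⟨∅, by simp, fun _ _ _ => rfl⟩, by simp⟩ hgen B hB ε hε
  rw [trim_measurableSet_eq hle ((hmeas hB').symmDiff hB), symmDiff_comm] at hlt
  obtain ⟨J, hJ, hdet⟩ := hB'
  exact ⟨J, B', hJ, hdet, hlt⟩

lemma exists_finitelyDetermined_ne_lt [Finite R] (hY : ∀ s ∈ Y, MeasurableSet s) (f : X → R)
    (hf : ∀ r, ∃ B, MeasurableSet[.generateFrom Y] B ∧ μ ((f ⁻¹' {r}) ∆ B) = 0)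
    {ε : ℝ≥0∞} (hε : 0 < ε) :
    ∃ (J : Finset (Set X)) (f' : X → R), ↑J ⊆ Y ∧ FactorsThrough f' (membershipPattern J) ∧
      μ {x | f x ≠ f' x} < ε := by
  classical
  rcases isEmpty_or_nonempty X with hX | ⟨⟨x₀⟩⟩
  · exact ⟨∅, f, by simp, fun x => hX.elim x, by simpa [Subsingleton.elim _ (∅ : Set X)] using hε⟩
  have : Nonempty R := ⟨f x₀⟩
  cases nonempty_fintype R
  obtain ⟨η, hη, hsum⟩ := ENNReal.exists_pos_sum_of_countable' hε.ne' R
  have happrox (r : R) : ∃ (J : Finset (Set X)) (B' : Set X), ↑J ⊆ Y ∧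
      FactorsThrough (fun x => x ∈ B') (membershipPattern J) ∧ μ ((f ⁻¹' {r}) ∆ B') < η r := by
    obtain ⟨B, hB, hnull⟩ := hf r
    obtain ⟨J, B', hJ, hdet, hlt⟩ := exists_finitelyDetermined_symmDiff_lt μ hY hB (hη r)
    refine ⟨J, B', hJ, hdet, (measure_symmDiff_le _ B _).trans_lt ?_⟩
    rwa [hnull, zero_add]
  choose J B' hJ hdet hlt using happrox
  refine ⟨Finset.univ.biUnion J, fun x => invFun singleton {r | x ∈ B' r}, by simpa using hJ,
    fun x y hxy => ?_, ?_⟩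
  · refine congrArg (invFun singleton) (Set.ext fun r => iff_of_eq ?_)
    exact factorsThrough_membershipPattern_mono (hdet r)
      (Finset.subset_biUnion_of_mem J (Finset.mem_univ r)) hxy
  · have hsub : {x | f x ≠ invFun singleton {r | x ∈ B' r}} ⊆ ⋃ r, (f ⁻¹' {r}) ∆ B' r := by
      intro x hx
      by_contra hcon
      simp only [mem_iUnion, mem_symmDiff, mem_preimage, mem_singleton_iff, not_exists] at hcon
      have hcells : {r | x ∈ B' r} = {f x} := by
        ext r
        simp only [mem_ofPred_eq, mem_singleton_iff]
        grind
      exact hx (by rw [hcells, leftInverse_invFun singleton_injective])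
    calc μ {x | f x ≠ invFun singleton {r | x ∈ B' r}}
        ≤ ∑' r, μ ((f ⁻¹' {r}) ∆ B' r) := (measure_mono hsub).trans (measure_iUnion_le _)
      _ ≤ ∑' r, η r := ENNReal.tsum_le_tsum fun r => (hlt r).le
      _ < ε := hsum

end FinitePatterns

/-! ### Finite coding data -/

section FiniteData

variable {G X T L : Type*} [Group G] [MulAction G X] [mX : MeasurableSpace X]

lemma IsPartition.exists_index {α : ℕ → Set X} (hα : IsPartition α) :
    ∃ idx : X → ℕ, LabelMeasurable mX idx ∧ ∀ i, idx ⁻¹' {i} = α i := by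
  choose idx hidx using fun x => mem_iUnion.1 (hα.2.2.ge (mem_univ x))
  have hcell (i : ℕ) : idx ⁻¹' {i} = α i := by
    ext x
    refine ⟨fun hx => hx ▸ hidx x, fun hx => by_contra fun hne => ?_⟩
    exact Set.disjoint_left.1 (hα.2.1 hne) (hidx x) hx
  exact ⟨idx, .of_singletons fun i => hcell i ▸ hα.1 i, hcell⟩

lemma exists_finite_decoding {μ : Measure X} [IsFiniteMeasure μ] [Finite L] {idx : X → ℕ}
    (hidx : ∀ g : G, LabelMeasurable mX fun x => idx (g • x)) {D : Set (Set X)}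
    (hD : ∀ s ∈ D, MeasurableSet s) {P : X → L}
    (hP : ∀ l, ∃ B, MeasurableSet[sigmaG G (range fun i => idx ⁻¹' {i}) ⊔ .generateFrom D] B ∧
      μ ((P ⁻¹' {l}) ∆ B) = 0) {ε : ℝ≥0∞} (hε : 0 < ε) :
    ∃ (n : ℕ) (T : Finset G) (J : Finset (Set X)) (P' : X → L), ↑J ⊆ D ∧
      FactorsThrough P' (fun x =>
        (fun t : T => Fin.clamp (idx (t.1 • x)) n, membershipPattern J x)) ∧
      μ {x | P x ≠ P' x} < ε := by
  classical
  rw [sigmaG, MeasurableSpace.generateFrom_sup_generateFrom] at hP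
  obtain ⟨J, P', hJ, hdet, hlt⟩ := exists_finitelyDetermined_ne_lt μ (fun s hs => by
    rcases hs with ⟨g, _, ⟨i, rfl⟩, rfl⟩ | hs
    exacts [hidx g {i}, hD s hs]) P hP hε
  have htranslate (s : Set X) : ∃ p : G × ℕ, s ∉ D → s ∈ J → s = {x | idx (p.1 • x) = p.2} := by
    by_cases hs : s ∈ J ∧ s ∉ D
    · obtain ⟨g, _, ⟨i, rfl⟩, hgi⟩ := (hJ hs.1).resolve_right hs.2
      exact ⟨(g, i), fun _ _ => hgi⟩
    · exact ⟨(1, 0), fun h h' => absurd ⟨h', h⟩ hs⟩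
  choose p hp using htranslate
  refine ⟨J.sup (fun s => (p s).2) + 1, J.image fun s => (p s).1, J.filter (· ∈ D), P',
    fun s hs => (Finset.mem_filter.1 hs).2, fun x y hxy => hdet ?_, hlt⟩
  obtain ⟨hletters, hpattern⟩ := Prod.mk.inj hxy
  refine membershipPattern_eq_iff.2 fun s hs => ?_
  by_cases hsD : s ∈ D
  · exact membershipPattern_eq_iff.1 hpattern s (Finset.mem_filter.2 ⟨hs, hsD⟩)
  · have hclamp := congrArg Fin.val
      (congrFun hletters ⟨(p s).1, Finset.mem_image.2 ⟨s, hs, rfl⟩⟩)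
    have hbound : (p s).2 ≤ J.sup fun s => (p s).2 := Finset.le_sup (f := fun s => (p s).2) hs
    rw [hp s hsD hs]
    simp only [Fin.coe_clamp, mem_ofPred_eq] at hclamp ⊢
    omega

lemma exists_pos_add_mul_lt {A B c : ℝ≥0∞} (hB : B ≠ ⊤) (hc : A < c) : ∃ ε > 0, A + B * ε < c := by
  have h : Tendsto (fun ε : ℝ≥0∞ => A + B * ε) (𝓝 0) (𝓝 (A + B * 0)) :=
    (ENNReal.Tendsto.const_mul tendsto_id (Or.inr hB)).const_add _
  rw [mul_zero, add_zero] at h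
  obtain ⟨ε, hεc, hε⟩ := (((h.mono_left nhdsWithin_le_nhds).eventually_lt_const hc).and
    (self_mem_nhdsWithin : Ioi 0 ∈ 𝓝[>] (0 : ℝ≥0∞))).exists
  exact ⟨ε, hε, hεc⟩

lemma lintegral_le_add_const_mul_measure_ne {μ : Measure X} {R : Type*} {ρ ρ' : X → R}
    (hne : MeasurableSet {x | ρ x ≠ ρ' x}) {c : X → R → ℝ≥0∞} {B : ℝ≥0∞} (hB : ∀ x r, c x r ≤ B) :
    ∫⁻ x, c x (ρ' x) ∂μ ≤ ∫⁻ x, c x (ρ x) ∂μ + B * μ {x | ρ x ≠ ρ' x} := by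
  rw [← lintegral_indicator_const hne, ← lintegral_add_right _ (measurable_const.indicator hne)]
  refine lintegral_mono fun x => ?_
  by_cases h : ρ x = ρ' x
  · simp [h]
  · simpa [h] using (hB x _).trans le_add_self

lemma exists_finite_kernel {μ : Measure X} [IsProbabilityMeasure μ] [Fintype T]
    {D : Set (Set X)} (hD : ∀ s ∈ D, MeasurableSet s) {a : X → T} (ha : LabelMeasurable mX a)
    {c : ℝ≥0∞} (hc : condEnt (.generateFrom D) μ (fun t => a ⁻¹' {t}) < c) :
    ∃ (J : Finset (Set X)) (q : (J → Prop) → T → ℝ≥0∞), ↑J ⊆ D ∧ (∀ r, IsPosSubprob (q r)) ∧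
      ∫⁻ x, codeLen (q (membershipPattern J x) (a x)) ∂μ < c := by
  classical
  have hm : MeasurableSpace.generateFrom D ≤ mX := MeasurableSpace.generateFrom_le hD
  obtain ⟨M, ρ, q, hρ, hq, hlt⟩ := exists_kernel_lintegral_codeLen_lt hm ha hc
  set B : ℝ≥0∞ := ∑ p : (T → Fin (M + 1)) × T, codeLen (q p.1 p.2)
  have hB : B ≠ ⊤ := ENNReal.sum_ne_top.2 fun p _ => codeLen_ne_top ((hq p.1).ne_zero p.2)
  have hcode_le (r : T → Fin (M + 1)) (t : T) : codeLen (q r t) ≤ B :=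
    Finset.single_le_sum (f := fun p : (T → Fin (M + 1)) × T => codeLen (q p.1 p.2))
      (fun _ _ => zero_le) (Finset.mem_univ (r, t))
  obtain ⟨ε, hε, hεc⟩ := exists_pos_add_mul_lt hB hlt
  obtain ⟨J, ρ', hJ, hdet, hne⟩ := exists_finitelyDetermined_ne_lt μ hD ρ
    (fun r => ⟨ρ ⁻¹' {r}, hρ _, by simp⟩) hε
  obtain ⟨x₀⟩ : Nonempty X := μ.nonempty_of_neZero
  have : Nonempty (T → Fin (M + 1)) := ⟨ρ x₀⟩
  obtain ⟨θ, rfl⟩ := (factorsThrough_iff _).1 hdet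
  refine ⟨J, fun r => q (θ r), hJ, fun r => hq _, lt_of_le_of_lt ?_ hεc⟩
  have hpat : LabelMeasurable mX (membershipPattern J) :=
    labelMeasurable_membershipPattern fun j hj => hD j (hJ hj)
  have hmeas : MeasurableSet {x | ρ x ≠ θ (membershipPattern J x)} :=
    ((hρ.mono hm).prodMk (hpat.comp θ)) {p | p.1 ≠ p.2}
  calc ∫⁻ x, codeLen (q (θ (membershipPattern J x)) (a x)) ∂μ
      ≤ ∫⁻ x, codeLen (q (ρ x) (a x)) ∂μ + B * μ {x | ρ x ≠ θ (membershipPattern J x)} :=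
        lintegral_le_add_const_mul_measure_ne hmeas (c := fun x r => codeLen (q r (a x)))
          fun x r => hcode_le r _
    _ ≤ ∫⁻ x, codeLen (q (ρ x) (a x)) ∂μ + B * ε := by gcongr; exact hne.le

theorem exists_finite_coding_data {μ : Measure X} [IsProbabilityMeasure μ] [Finite L]
    {C : Set (Set X)} (hC : ∀ s ∈ C, MeasurableSet s) (hG : InvariantAlg G mX) {P : X → L}
    (hP : LabelMeasurable mX P) {c : ℝ≥0∞} (hrk : rokhlin G (.generateFrom C) μ < c)
    {ε : ℝ≥0∞} (hε : 0 < ε) :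
    ∃ (n : ℕ) (a : X → Fin n) (J K : Finset (Set X)) (T : Finset G)
      (ψ : (T → Fin n) × (J → Prop) × (K → Prop) → L)
      (q : (J → Prop) × (K → Prop) → Fin n → ℝ≥0∞),
      LabelMeasurable mX a ∧ ↑J ⊆ C ∧
      (∀ s ∈ K, MeasurableSet s ∧ ∀ g : G, (fun x => g • x) ⁻¹' s = s) ∧
      μ {x | P x ≠ ψ (fun t => a (t.1 • x), membershipPattern J x, membershipPattern K x)} < ε ∧
      (∀ r, IsPosSubprob (q r)) ∧
      ∫⁻ x, codeLen (q (membershipPattern J x, membershipPattern K x) (a x)) ∂μ < c := by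
  classical
  obtain ⟨_, ⟨α, hα, hgen, rfl⟩, hlt⟩ := sInf_lt_iff.1 hrk
  set Inv : Set (Set X) := {A | MeasurableSet A ∧ ∀ g : G, (fun x => g • x) ⁻¹' A = A}
  have hm : MeasurableSpace.generateFrom C ⊔ invSigma G X = .generateFrom (C ∪ Inv) :=
    MeasurableSpace.generateFrom_sup_generateFrom
  have hD : ∀ s ∈ C ∪ Inv, MeasurableSet s := fun s hs => hs.elim (hC s) And.left
  obtain ⟨idx, hidx, hcell⟩ := hα.exists_index
  obtain rfl : (fun i => idx ⁻¹' {i}) = α := funext hcell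
  rw [sup_assoc, hm] at hgen
  obtain ⟨n, T, J₀, P', hJ₀, hdet, hPP'⟩ := exists_finite_decoding (fun g => hidx.smul hG g) hD
    (fun l => hgen _ (hP {l})) hε
  have ha : LabelMeasurable mX fun x => Fin.clamp (idx x) n := hidx.comp (Fin.clamp · n)
  obtain ⟨J₁, q, hJ₁, hq, hqlt⟩ := exists_finite_kernel hD ha (hm ▸ (condEnt_comp_le
    (hm ▸ MeasurableSpace.generateFrom_le hD) hidx (Fin.clamp · n)).trans_lt hlt)
  set J := (J₀ ∪ J₁).filter (· ∈ C)
  set K := (J₀ ∪ J₁).filter (· ∈ Inv)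
  have hsplit {I : Finset (Set X)} (hI : ↑I ⊆ C ∪ Inv) (hIJ : I ⊆ J₀ ∪ J₁) :=
    factorsThrough_membershipPattern_split hI (J := J) (K := K)
      (fun s hs hsC => Finset.mem_filter.2 ⟨hIJ hs, hsC⟩)
      (fun s hs hsK => Finset.mem_filter.2 ⟨hIJ hs, hsK⟩)
  obtain ⟨θ, hθ⟩ := (factorsThrough_iff _).1 (hsplit hJ₁ Finset.subset_union_right)
  obtain ⟨x₀⟩ : Nonempty X := μ.nonempty_of_neZero
  have : Nonempty L := ⟨P x₀⟩
  have hP' : FactorsThrough P' fun x => (fun t : T => Fin.clamp (idx (t.1 • x)) n,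
      membershipPattern J x, membershipPattern K x) := fun x y hxy =>
    hdet (Prod.ext (Prod.mk.inj hxy).1
      (hsplit hJ₀ Finset.subset_union_left (Prod.mk.inj hxy).2))
  obtain ⟨ψ, rfl⟩ := (factorsThrough_iff _).1 hP'
  rw [hθ] at hqlt
  exact ⟨n + 1, _, J, K, T, ψ, fun r => q (θ r), ha,
    fun s hs => (Finset.mem_filter.1 hs).2, fun s hs => (Finset.mem_filter.1 hs).2, hPP',
    fun r => hq _, hqlt⟩

end FiniteData

/-! ### Markers for aperiodic actions -/

section SmallMarkers

variable {G X : Type*} [Group G] [MulAction G X] {A : Set X}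

/-- The points of `A` which the `n`-th element of the enumeration `g` moves to a new point. -/
def freshPoints (g : ℕ → G) (A : Set X) (n : ℕ) : Set X :=
  {x ∈ A | ∀ i < n, g i • x ≠ g n • x}

lemma infinite_setOf_mem_freshPoints {g : ℕ → G} (hg : Surjective g) {x : X} (hx : x ∈ A)
    (horbit : (MulAction.orbit G x).Infinite) : {n | x ∈ freshPoints g A n}.Infinite := by
  classical
  intro hfin
  refine horbit ((hfin.image fun n => g n • x).subset ?_)
  rintro _ ⟨h, rfl⟩
  obtain ⟨n, rfl⟩ := hg h
  have hex : ∃ i, g i • x = g n • x := ⟨n, rfl⟩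
  refine ⟨Nat.find hex, ⟨hx, fun i hi h => Nat.find_min hex hi ?_⟩, Nat.find_spec hex⟩
  exact h.trans (Nat.find_spec hex)

lemma disjoint_preimage_freshPoints (g : ℕ → G) (hA : ∀ x ∈ A, ∀ h : G, h • x ∈ A → h • x = x) :
    Pairwise (onFun Disjoint fun n => (fun x => (g n)⁻¹ • x) ⁻¹' freshPoints g A n) := by
  refine (pairwise_disjoint_on _).2 fun m n hmn => Set.disjoint_left.2 fun x hm hn => ?_
  have heq : (g n)⁻¹ • x = (g m)⁻¹ • x := by
    have := hA _ hm.1 ((g n)⁻¹ * g m)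
    rw [mul_smul, smul_inv_smul] at this
    exact this hn.1
  refine hn.2 m hmn ?_
  change g m • (g n)⁻¹ • x = g n • (g n)⁻¹ • x
  rw [smul_inv_smul, heq, smul_inv_smul]

variable [MeasurableSpace X] [MeasurableSpace.CountablySeparated X] {μ : Measure X}

lemma measurableSet_freshPoints (hμ : IsPmp G μ) (hA : MeasurableSet A) (g : ℕ → G) (n : ℕ) :
    MeasurableSet (freshPoints g A n) := by
  obtain ⟨e, he, hinj⟩ := MeasurableSpace.measurable_injection_nat_bool_of_countablySeparated X
  have hne (i : ℕ) : MeasurableSet {x : X | g i • x = g n • x}ᶜ := by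
    simp_rw [← hinj.eq_iff]
    exact (measurableSet_eq_fun (he.comp (hμ (g i)).measurable)
      (he.comp (hμ (g n)).measurable)).compl
  have hinter : freshPoints g A n = A ∩ ⋂ i : Fin n, {x | g i • x = g n • x}ᶜ := by
    ext x
    simp [freshPoints, Fin.forall_iff]
  rw [hinter]
  exact hA.inter (MeasurableSet.iInter fun i => hne i)

variable [IsProbabilityMeasure μ] [Countable G]

/- The sets of fresh points have pairwise disjoint translates, so their measures are summable, yet
by aperiodicity almost every point of `A` lies in infinitely many of them. -/
lemma measure_eq_zero_of_transversal (hμ : IsPmp G μ) (hap : Aperiodic G μ) (hA : MeasurableSet A)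
    (hone : ∀ x ∈ A, ∀ h : G, h • x ∈ A → h • x = x) : μ A = 0 := by
  obtain ⟨g, hg⟩ := exists_surjective_nat G
  have hfresh (n : ℕ) := measurableSet_freshPoints hμ hA g n
  have hsum : ∑' n, μ (freshPoints g A n) ≤ 1 := by
    have htranslate (n : ℕ) := (hμ (g n)⁻¹).measure_preimage (hfresh n).nullMeasurableSet
    rw [← tsum_congr htranslate, ← measure_iUnion (disjoint_preimage_freshPoints g hone)
      fun n => (hμ _).measurable (hfresh n)]
    exact prob_le_one
  have hfin := ae_finite_setOfPred_mem (hsum.trans_lt ENNReal.one_lt_top).ne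
  refine measure_eq_zero_iff_ae_notMem.2 ?_
  filter_upwards [hap, hfin] with x horbit hx hxA
  exact infinite_setOf_mem_freshPoints hg hxA horbit hx

end SmallMarkers

section CompleteSections

variable {G X : Type*} [Group G] [MulAction G X] {B : ℕ → Set X}

/-- The complete sections obtained by successively thinning out the whole space: at step `n`, the
orbits whose remaining points meet `B n` keep only those points. -/
def thinning (G : Type*) {X : Type*} [Group G] [MulAction G X] (B : ℕ → Set X) : ℕ → Set X
  | 0 => univ
  | n + 1 => (thinning G B n ∩ B n) ∪ (thinning G B n \ saturation G (thinning G B n ∩ B n))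

lemma antitone_thinning : Antitone (thinning G B) :=
  antitone_nat_of_succ_le fun _ => union_subset inter_subset_left sdiff_subset

lemma saturation_thinning (n : ℕ) : saturation G (thinning G B n) = univ := by
  induction n with
  | zero => exact eq_univ_of_forall fun x => ⟨1, mem_univ _⟩
  | succ n ih =>
    refine eq_univ_of_forall fun x => ?_
    by_cases hx : x ∈ saturation G (thinning G B n ∩ B n)
    · obtain ⟨g, hg⟩ := hx
      exact ⟨g, Or.inl hg⟩
    · obtain ⟨g, hg⟩ : x ∈ saturation G (thinning G B n) := ih ▸ mem_univ x
      refine ⟨g, Or.inr ⟨hg, fun h => hx ?_⟩⟩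
      rwa [← preimage_smul_saturation g]

lemma mem_of_mem_iInter_thinning {x : X} {g : G} (hx : x ∈ ⋂ n, thinning G B n)
    (hgx : g • x ∈ ⋂ n, thinning G B n) {n : ℕ} (hn : x ∈ B n) : g • x ∈ B n := by
  rcases mem_iInter.1 hgx (n + 1) with h | h
  · exact h.2
  · exact absurd ⟨g⁻¹, by simpa only [inv_smul_smul] using ⟨mem_iInter.1 hx n, hn⟩⟩ h.2

variable [MeasurableSpace X] {μ : Measure X} [Countable G]

lemma measurableSet_thinning (hG : InvariantAlg G ‹MeasurableSpace X›)
    (hB : ∀ n, MeasurableSet (B n)) (n : ℕ) : MeasurableSet (thinning G B n) := by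
  induction n with
  | zero => exact .univ
  | succ n ih =>
    exact (ih.inter (hB n)).union (ih.diff (measurableSet_saturation hG (ih.inter (hB n))))

theorem exists_complete_section_measure_lt [MeasurableSpace.CountablySeparated X]
    [IsProbabilityMeasure μ] (hμ : IsPmp G μ) (hap : Aperiodic G μ) {δ : ℝ≥0∞} (hδ : 0 < δ) :
    ∃ A : Set X, MeasurableSet A ∧ μ A < δ ∧ saturation G A = univ := by
  obtain ⟨B, hB, hsep⟩ := exists_seq_separating X MeasurableSet.empty univ
  have hmeas := measurableSet_thinning (fun g _ h => (hμ g).measurable h) hB (G := G)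
  have htransversal (x : X) (hx : x ∈ ⋂ n, thinning G B n) (g : G)
      (hgx : g • x ∈ ⋂ n, thinning G B n) : g • x = x := by
    refine hsep _ trivial _ trivial fun n => ⟨fun h => ?_, mem_of_mem_iInter_thinning hx hgx⟩
    rw [← inv_smul_smul g x]
    exact mem_of_mem_iInter_thinning hgx (by rwa [inv_smul_smul]) h
  have hnull := measure_eq_zero_of_transversal hμ hap (MeasurableSet.iInter hmeas) htransversal
  have hlim := tendsto_measure_iInter_atTop (μ := μ) (fun n => (hmeas n).nullMeasurableSet)
    antitone_thinning ⟨0, measure_ne_top _ _⟩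
  rw [hnull] at hlim
  obtain ⟨n, hn⟩ := (hlim.eventually (gt_mem_nhds hδ)).exists
  exact ⟨_, hmeas n, hn, saturation_thinning n⟩

end CompleteSections

/-! ### Sparse locally constant codes for invariant labellings -/

section FirstLabel

variable {G X Γ : Type*}

/-- The first label present in a finite window, and `j₀` if there is none. -/
def firstLabel {K : ℕ} (j₀ : Γ) (v : Fin K → Option Γ) : Γ :=
  ((List.finRange K).findSome? v).getD j₀

lemma firstLabel_eq {K : ℕ} {j₀ j : Γ} {v : Fin K → Option Γ} (hex : ∃ k, v k = some j)
    (huniq : ∀ k i, v k = some i → i = j) : firstLabel j₀ v = j := by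
  cases h : (List.finRange K).findSome? v with
  | none =>
    obtain ⟨k, hk⟩ := hex
    simp [List.findSome?_eq_none_iff.1 h k (List.mem_finRange k)] at hk
  | some i =>
    obtain ⟨k, -, hk⟩ := List.exists_of_findSome?_eq_some h
    simp [firstLabel, h, huniq k i hk]

lemma firstLabel_of_forall_eq_none {K : ℕ} {j₀ : Γ} {v : Fin K → Option Γ}
    (hv : ∀ k, v k = none) : firstLabel j₀ v = j₀ := by
  simp [firstLabel, List.findSome?_eq_none_iff.2 fun k _ => hv k]

open Classical in
lemma setOf_ne_firstLabel_subset [Group G] [MulAction G X] {γ : X → Γ}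
    (hinv : ∀ (g : G) x, γ (g • x) = γ x) {A E : Set X} {z : X → Option Γ}
    (hz : ∀ x ∉ E, z x = if x ∈ A then some (γ x) else none)
    (g : ℕ → G) (K : ℕ) (j₀ : Γ) : {x | γ x ≠ firstLabel j₀ fun k : Fin K => z (g k • x)} ⊆
      (hitBefore g A K)ᶜ ∪ {x | ∃ k : Fin K, g k • x ∈ E} := by
  refine fun x hx => or_iff_not_imp_right.2 fun hE hhit =>
    hx (firstLabel_eq ?_ fun k i hi => ?_).symm
  · obtain ⟨k, hk⟩ := mem_iUnion.1 hhit
    exact ⟨k, by simp [hz _ fun h => hE ⟨k, h⟩, smul_mem_of_mem_firstHit hk, hinv]⟩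
  · rw [hz _ fun h => hE ⟨k, h⟩, hinv] at hi
    split_ifs at hi
    exact (Option.some_inj.1 hi).symm

end FirstLabel

section SparseCodes

variable {G X Γ : Type*} [Group G] [MulAction G X] [MeasurableSpace X]

lemma measurableSet_invSigma_saturation [Countable G] (hG : InvariantAlg G ‹MeasurableSpace X›)
    {V : Set X} (hV : MeasurableSet V) : MeasurableSet[invSigma G X] (saturation G V) :=
  measurableSet_invSigma (measurableSet_saturation hG hV) fun g => preimage_smul_saturation g V

lemma measure_exists_smul_mem_le {μ : Measure X} (hμ : IsPmp G μ) {ι : Type*} [Fintype ι]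
    (g : ι → G) (E : Set X) : μ {x | ∃ i, g i • x ∈ E} ≤ Fintype.card ι * μ E := by
  have hunion : {x | ∃ i, g i • x ∈ E} = ⋃ i, (fun x => g i • x) ⁻¹' E := by
    ext x
    simp
  rw [hunion]
  calc μ (⋃ i, (fun x => g i • x) ⁻¹' E)
      ≤ ∑ i, μ ((fun x => g i • x) ⁻¹' E) := measure_iUnion_fintype_le _ _
    _ ≤ ∑ _i : ι, μ E := Finset.sum_le_sum fun i _ => (hμ (g i)).measure_preimage_le E
    _ = Fintype.card ι * μ E := by simp

/-- The invariant labelling `γ` is *sparsely codable* if it can be approximated in measure by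
locally constant labellings that are determined by locally constant marker labels `z`, where the
markers, the points with `z x ≠ none`, have arbitrarily small measure. -/
def SparselyCodable (G : Type*) [Group G] [MulAction G X] [TopologicalSpace X] (μ : Measure X)
    (γ : X → Γ) : Prop :=
  ∀ ε : ℝ≥0∞, 0 < ε → ∃ (γ' : X → Γ) (z : X → Option Γ),
    IsLocallyConstant γ' ∧ IsLocallyConstant z ∧ μ {x | γ x ≠ γ' x} < ε ∧ μ {x | z x ≠ none} < ε ∧
      MarkerDetermines G (invSigma G X) {x | z x ≠ none} z γ'

lemma sparselyCodable_of_isErgodicInv [Countable G] [TopologicalSpace X] [Countable Γ]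
    {μ : Measure X} [IsProbabilityMeasure μ] (herg : IsErgodicInv G μ) {γ : X → Γ}
    (hγ : LabelMeasurable ‹MeasurableSpace X› γ) (hinv : ∀ (g : G) x, γ (g • x) = γ x) :
    SparselyCodable G μ γ := by
  intro ε hε
  obtain ⟨j, hj⟩ : ∃ j, μ (γ ⁻¹' {j}) ≠ 0 := by
    by_contra! hnull
    have hcover : ⋃ j, γ ⁻¹' {j} = univ := by
      ext x
      simp
    simpa [hcover] using measure_iUnion_null hnull
  have hone : μ (γ ⁻¹' {j}) = 1 := by
    refine (herg _ (hγ {j}) fun g => ?_).resolve_left hj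
    ext x
    simp [hinv]
  refine ⟨fun _ => j, fun _ => none, .const j, .const none, ?_, by simpa using hε,
    fun M _ _ _ _ => .const _, fun i => .diff (.const _) ?_⟩
  · exact ((prob_compl_eq_zero_iff (hγ {j})).2 hone).trans_lt hε
  · exact measurableSet_saturation invariantAlg_invSigma (.const _)

lemma markerDetermines_firstLabel [Countable G] [Countable Γ]
    (hG : InvariantAlg G ‹MeasurableSpace X›) {z : X → Option Γ}
    (hz : LabelMeasurable ‹MeasurableSpace X› z) {K : ℕ} (g : Fin K → G) (j₀ : Γ) :
    MarkerDetermines G (invSigma G X) {x | z x ≠ none} z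
      fun x => firstLabel j₀ fun k => z (g k • x) where
  determined M hM _ hzM := (LabelMeasurable.pi fun k => hzM.smul hM (g k)).comp (firstLabel j₀)
  off_orbits j := by
    have hsat := measurableSet_invSigma_saturation hG (hz {none}ᶜ)
    have heq : (fun x => firstLabel j₀ fun k => z (g k • x)) ⁻¹' {j} \
        saturation G {x | z x ≠ none} = {_x | j₀ = j} \ saturation G {x | z x ≠ none} := by
      ext x
      refine and_congr_left fun hx => ?_
      simp [firstLabel_of_forall_eq_none fun k => not_not.1 fun h => hx ⟨g k, h⟩]
    rw [heq]
    exact .diff (.const _) hsat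

lemma exists_measure_compl_hitBefore_lt {μ : Measure X} [IsProbabilityMeasure μ]
    (hμ : IsPmp G μ) {A : Set X} (hA : MeasurableSet A)
    (hsat : saturation G A = univ) {g : ℕ → G} (hg : Surjective g) {ε : ℝ≥0∞} (hε : 0 < ε) :
    ∃ K, μ (hitBefore g A K)ᶜ < ε := by
  have hmeas := measurableSet_hitBefore (fun g _ h => (hμ g).measurable h) hA g
  have hlim := tendsto_measure_iInter_atTop (μ := μ)
    (fun K => (hmeas K).compl.nullMeasurableSet)
    (fun _ _ h => compl_subset_compl.2 (hitBefore_mono g A h)) ⟨0, measure_ne_top _ _⟩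
  rw [← compl_iUnion, iUnion_hitBefore hg, hsat, compl_univ, measure_empty] at hlim
  exact (hlim.eventually (gt_mem_nhds hε)).exists

end SparseCodes

section SparseCodesExist

variable {G X Γ : Type*} [Group G] [MulAction G X] [TopologicalSpace X] [mX : MeasurableSpace X]
  [CompactSpace X] [T2Space X] [TotallyDisconnectedSpace X] [SecondCountableTopology X]
  [BorelSpace X] {μ : Measure X} [IsProbabilityMeasure μ]

lemma exists_isLocallyConstant_ne_lt {R : Type*} [Finite R] {f : X → R} (hf : LabelMeasurable mX f)
    {ε : ℝ≥0∞} (hε : 0 < ε) : ∃ f' : X → R, IsLocallyConstant f' ∧ μ {x | f x ≠ f' x} < ε := by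
  have hmX : mX = .generateFrom {s | IsClopen s} :=
    (BorelSpace.measurable_eq (α := X)).trans isTopologicalBasis_isClopen.borel_eq_generateFrom
  obtain ⟨J, f', hJ, hf', hlt⟩ := exists_finitelyDetermined_ne_lt (μ := μ)
    (fun s (hs : IsClopen s) => hs.isOpen.measurableSet) f
    (fun r => ⟨f ⁻¹' {r}, hmX ▸ hf {r}, by simp⟩) hε
  refine ⟨f', (IsLocallyConstant.iff_eventually_eq _).2 fun x => ?_, hlt⟩
  filter_upwards [(isLocallyConstant_membershipPattern fun j hj => hJ hj).eventually_eq x] with y hy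
    using hf' hy

variable [ContinuousConstSMul G X] [Countable G] [Finite Γ] {γ : X → Γ}

open Classical in
lemma sparselyCodable_of_aperiodic (hμ : IsPmp G μ) (hap : Aperiodic G μ)
    (hγ : LabelMeasurable mX γ) (hinv : ∀ (g : G) x, γ (g • x) = γ x) : SparselyCodable G μ γ := by
  intro ε hε
  have hε2 : 0 < ε / 2 := ENNReal.half_pos hε.ne'
  obtain ⟨j₀⟩ : Nonempty Γ := μ.nonempty_of_neZero.map γ
  obtain ⟨A, hA, hAlt, hsat⟩ := exists_complete_section_measure_lt hμ hap hε2
  obtain ⟨g, hg⟩ := exists_surjective_nat G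
  obtain ⟨K, hK⟩ := exists_measure_compl_hitBefore_lt hμ hA hsat hg hε2
  obtain ⟨f', hf', hlt⟩ := exists_isLocallyConstant_ne_lt (μ := μ)
    ((LabelMeasurable.of_mem_iff hA).prodMk hγ)
    (ENNReal.div_pos hε2.ne' (by finiteness) : 0 < ε / 2 / (K + 1))
  let E : Set X := {x | (x ∈ A, γ x) ≠ f' x}
  have hE : (K + 1) * μ E ≤ ε / 2 := (mul_le_mul_right hlt.le _).trans ENNReal.mul_div_le
  let z : X → Option Γ := fun x => if (f' x).1 then some (f' x).2 else none
  have hz : IsLocallyConstant z := hf'.comp fun p : Prop × Γ => if p.1 then some p.2 else none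
  have hzE (x : X) (hx : x ∉ E) : z x = if x ∈ A then some (γ x) else none := by
    simp only [z, ← not_not.1 hx]
  refine ⟨fun x => firstLabel j₀ fun k : Fin K => z (g k • x), z, ?_, hz, ?_, ?_,
    markerDetermines_firstLabel (fun g _ h => (hμ g).measurable h) (.of_isLocallyConstant hz) _ _⟩
  · exact (isLocallyConstant_pi fun k : Fin K =>
      hz.comp_continuous (continuous_const_smul (g k))).comp (firstLabel j₀)
  · calc μ _ ≤ μ (hitBefore g A K)ᶜ + μ {x | ∃ k : Fin K, g k • x ∈ E} :=
          (measure_mono (setOf_ne_firstLabel_subset hinv hzE g K j₀)).trans (measure_union_le _ _)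
      _ ≤ μ (hitBefore g A K)ᶜ + (K + 1) * μ E := by
          gcongr
          refine (measure_exists_smul_mem_le hμ _ E).trans ?_
          rw [Fintype.card_fin]
          gcongr
          exact le_self_add
      _ < ε / 2 + ε / 2 := ENNReal.add_lt_add_of_lt_of_le (by finiteness) hK hE
      _ = ε := ENNReal.add_halves ε
  · have hsub : {x | z x ≠ none} ⊆ A ∪ E := fun x hx =>
      or_iff_not_imp_right.2 fun hxE => by_contra fun hxA => hx (by simp [hzE x hxE, hxA])
    calc μ {x | z x ≠ none} ≤ μ A + μ E := (measure_mono hsub).trans (measure_union_le _ _)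
      _ ≤ μ A + (K + 1) * μ E := by
          gcongr
          exact le_mul_of_one_le_left' le_add_self
      _ < ε / 2 + ε / 2 := ENNReal.add_lt_add_of_lt_of_le (by finiteness) hAlt hE
      _ = ε := ENNReal.add_halves ε

end SparseCodesExist

/-! ### Boundaries of labellings of finitely generated groups -/

section Boundary

variable {G X Γ : Type*} [Group G] [MulAction G X] {T : Set G} {γ : X → Γ}

/-- The points where the labelling `γ` differs from its translate by some element of `T`. -/
def boundarySet (T : Set G) (γ : X → Γ) : Set X := {x | ∃ t : T, γ (t.1 • x) ≠ γ x}

open Classical in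
/-- The labelling `γ` revealed on its boundary only. -/
noncomputable def boundaryLabel (T : Set G) (γ : X → Γ) (x : X) : Option Γ :=
  if x ∈ boundarySet T γ then some (γ x) else none

open Classical in
/-- The labels of `x` and `g • x`, revealed only when they differ. -/
noncomputable def jump (γ : X → Γ) (g : G) (x : X) : Option (Γ × Γ) :=
  if γ (g • x) = γ x then none else some (γ x, γ (g • x))

lemma setOf_boundaryLabel_ne_none : {x | boundaryLabel T γ x ≠ none} = boundarySet T γ := by
  ext x
  simp [boundaryLabel]

lemma isLocallyConstant_boundaryLabel [TopologicalSpace X] [ContinuousConstSMul G X] [Finite T]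
    (hγ : IsLocallyConstant γ) : IsLocallyConstant (boundaryLabel T γ) := by
  classical
  exact ((isLocallyConstant_pi fun t : T =>
    hγ.comp_continuous (continuous_const_smul t.1)).prodMk hγ).comp fun p =>
      if ∃ t, p.1 t ≠ p.2 then some p.2 else none

lemma measure_boundarySet_le [MeasurableSpace X] {μ : Measure X} (hμ : IsPmp G μ) [Fintype T]
    (h1 : 1 ∈ T) {γ' : X → Γ} (hinv : ∀ (g : G) x, γ' (g • x) = γ' x) :
    μ (boundarySet T γ) ≤ Fintype.card T * μ {x | γ' x ≠ γ x} := by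
  refine (measure_mono ?_).trans (measure_exists_smul_mem_le hμ Subtype.val _)
  rintro x ⟨t, ht⟩
  by_contra hx
  have hx' (s : T) : γ' x = γ (s.1 • x) := by
    simpa [hinv] using not_exists.1 hx s
  exact ht (by simpa using (hx' t).symm.trans (hx' ⟨1, h1⟩))

lemma labelMeasurable_jump {M : MeasurableSpace X} (hM : InvariantAlg G M) [Countable Γ]
    (hT : ∀ t ∈ T, t⁻¹ ∈ T) (hz : LabelMeasurable M (boundaryLabel T γ)) {g : G}
    (hg : g ∈ Subgroup.closure T) : LabelMeasurable M (jump γ g) := by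
  induction hg using Subgroup.closure_induction with
  | mem t ht =>
    refine (hz.prodMk (hz.smul hM t)).of_factorsThrough fun x y hxy => ?_
    have hjump (w : X) (hw : γ (t • w) ≠ γ w) : w ∈ boundarySet T γ ∧ t • w ∈ boundarySet T γ :=
      ⟨⟨⟨t, ht⟩, hw⟩, ⟨⟨t⁻¹, hT t ht⟩, by simpa using hw.symm⟩⟩
    simp only [boundaryLabel, Prod.mk.injEq] at hxy
    grind [jump]
  | one =>
    have hnone : jump γ (1 : G) = fun _ => none := by
      ext x : 1
      simp [jump]
    exact hnone ▸ fun _ => .const _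
  | mul a b _ _ ha hb =>
    refine (hb.prodMk (ha.smul hM b)).of_factorsThrough fun x y hxy => ?_
    simp only [Prod.mk.injEq] at hxy
    grind [jump, mul_smul]
  | inv a _ ha =>
    refine (ha.smul hM a⁻¹).of_factorsThrough fun x y hxy => ?_
    grind [jump, smul_inv_smul]

lemma measurableSet_boundarySet [Countable G] [Countable Γ] [mX : MeasurableSpace X]
    (hG : InvariantAlg G mX) (hγ : LabelMeasurable mX γ) : MeasurableSet (boundarySet T γ) := by
  rw [boundarySet, ofPred_exists]
  exact .iUnion fun t => ((hγ.smul hG t.1).prodMk hγ) {p | p.1 ≠ p.2}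

lemma eq_of_notMem_saturation_boundarySet {x : X}
    (hx : x ∉ saturation G (boundarySet T γ)) {g : G} (hg : g ∈ Subgroup.closure T) :
    γ (g • x) = γ x := by
  have hstep (h : G) {t : G} (ht : t ∈ T) : γ (t • h • x) = γ (h • x) :=
    by_contra fun hne => hx ⟨h, ⟨t, ht⟩, hne⟩
  induction hg using Subgroup.closure_induction_left with
  | one => simp
  | mul_left t ht h _ ih => rw [mul_smul, hstep h ht, ih]
  | inv_mul_cancel t ht h _ ih => rw [← ih, ← hstep _ ht, mul_smul, smul_inv_smul]

/-- The points on whose whole orbit the labelling `γ` takes the value `j`. -/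
def constantOrbits (G : Type*) [Group G] [MulAction G X] (γ : X → Γ) (j : Γ) : Set X :=
  {x | ∀ g : G, γ (g • x) = j}

lemma measurableSet_constantOrbits [Countable G] [mX : MeasurableSpace X] (hG : InvariantAlg G mX)
    (hγ : LabelMeasurable mX γ) (j : Γ) : MeasurableSet[invSigma G X] (constantOrbits G γ j) := by
  have heq : constantOrbits G γ j = (saturation G (γ ⁻¹' {j}ᶜ))ᶜ := by
    ext x
    simp [constantOrbits, saturation]
  exact heq ▸ (measurableSet_invSigma_saturation hG (hγ {j}ᶜ)).compl

lemma preimage_eq_constantOrbits_union_iUnion_jump (j : Γ) : γ ⁻¹' {j} =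
    constantOrbits G γ j ∪ ⋃ g : G, jump γ g ⁻¹' {o | ∃ i, o = some (j, i)} := by
  ext x
  simp only [mem_preimage, mem_singleton_iff, mem_union, mem_iUnion, constantOrbits]
  constructor
  · intro hx
    by_cases h : ∀ g : G, γ (g • x) = j
    · exact .inl h
    · obtain ⟨g, hg⟩ := not_forall.1 h
      exact .inr ⟨g, γ (g • x), by simp [jump, hx, hg]⟩
  · rintro (h | ⟨g, i, h⟩)
    · simpa using h 1
    · grind [jump]

lemma markerDetermines_boundaryLabel [Countable G] [Countable Γ] [mX : MeasurableSpace X]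
    (hG : InvariantAlg G mX) (hγ : LabelMeasurable mX γ)
    (hT : ∀ t ∈ T, t⁻¹ ∈ T) (hgen : Subgroup.closure T = ⊤) :
    MarkerDetermines G (invSigma G X) (boundarySet T γ) (boundaryLabel T γ) γ where
  determined := by
    have hconst := measurableSet_constantOrbits hG hγ
    refine fun M hM hle hz => .of_singletons fun j => ?_
    rw [preimage_eq_constantOrbits_union_iUnion_jump (G := G)]
    exact .union (hle _ (hconst j)) <| .iUnion fun g =>
      labelMeasurable_jump hM hT hz (hgen ▸ Subgroup.mem_top g) _
  off_orbits j := by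
    have heq : γ ⁻¹' {j} \ saturation G (boundarySet T γ) =
        constantOrbits G γ j \ saturation G (boundarySet T γ) := by
      ext x
      refine and_congr_left fun hx => ⟨fun (hj : γ x = j) g => ?_, fun h => by simpa using h 1⟩
      rw [← hj]
      exact eq_of_notMem_saturation_boundarySet hx (hgen ▸ Subgroup.mem_top g)
    rw [heq]
    exact (measurableSet_constantOrbits hG hγ j).diff
      (measurableSet_invSigma_saturation hG (measurableSet_boundarySet hG hγ))

end Boundary

section SparseCodesFG

variable {G X Γ : Type*} [Group G] [MulAction G X] [TopologicalSpace X] [mX : MeasurableSpace X]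
  [CompactSpace X] [T2Space X] [TotallyDisconnectedSpace X] [SecondCountableTopology X]
  [BorelSpace X] [ContinuousConstSMul G X] [Countable G] [Finite Γ] {γ : X → Γ}
  {μ : Measure X} [IsProbabilityMeasure μ]

lemma sparselyCodable_of_fg [Group.FG G] (hμ : IsPmp G μ)
    (hγ : LabelMeasurable mX γ) (hinv : ∀ (g : G) x, γ (g • x) = γ x) : SparselyCodable G μ γ := by
  intro ε hε
  obtain ⟨S, hS, hfin⟩ := Group.fg_iff.1 ‹Group.FG G›
  let T : Set G := insert 1 (S ∪ S⁻¹)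
  have hTinv (t : G) (ht : t ∈ T) : t⁻¹ ∈ T := by
    simpa [T, or_comm] using ht
  have hgen : Subgroup.closure T = ⊤ := top_le_iff.1 <|
    hS ▸ Subgroup.closure_mono (subset_union_left.trans (subset_insert _ _))
  have : Fintype T := ((hfin.union hfin.inv).insert 1).fintype
  obtain ⟨γ', hγ', hlt⟩ := exists_isLocallyConstant_ne_lt (μ := μ) hγ
    (ENNReal.div_pos hε.ne' (by finiteness) : 0 < ε / (Fintype.card T + 1))
  have hle : μ {x | γ x ≠ γ' x} ≤ (Fintype.card T + 1) * μ {x | γ x ≠ γ' x} :=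
    le_mul_of_one_le_left' le_add_self
  have hlt' : (Fintype.card T + 1) * μ {x | γ x ≠ γ' x} < ε := by
    rw [mul_comm]
    exact ENNReal.mul_lt_of_lt_div hlt
  refine ⟨γ', boundaryLabel T γ', hγ', isLocallyConstant_boundaryLabel hγ', hle.trans_lt hlt',
    ?_, ?_⟩
  · rw [setOf_boundaryLabel_ne_none]
    refine ((measure_boundarySet_le hμ (mem_insert _ _) hinv).trans ?_).trans_lt hlt'
    gcongr
    exact le_self_add
  · rw [setOf_boundaryLabel_ne_none]
    exact markerDetermines_boundaryLabel (fun g _ h => (hμ g).measurable h)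
      (.of_isLocallyConstant hγ') hTinv hgen

end SparseCodesFG

/-! ### Correcting an approximate coding -/

section Correction

variable {G X A R S Z Γ L : Type*}

/-- The ideal code length, with marker labels described by the weights `w`, of a point with
context `s`, letter `i` and marker label `z`, as it appears in `exists_isPartition_coding`. -/
noncomputable def codingCost (κ : ℝ≥0) (q : S → A → ℝ≥0∞) (w : Z → ℝ≥0∞) (z₀ : Z) (s : S) (i : A)
    (z : Z) : ℝ≥0∞ :=
  (1 + κ) * codeLen (q s i) + codeLen (w z) +
    {z | z ≠ z₀}.indicator (fun _ => codeLen (zetaWeight κ 0)) z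

lemma codingCost_ne_top {κ : ℝ≥0} (hκ : 0 < κ) {q : S → A → ℝ≥0∞} {w : Z → ℝ≥0∞} (z₀ : Z) {s : S}
    {i : A} {z : Z} (hq : q s i ≠ 0) (hw : w z ≠ 0) : codingCost κ q w z₀ s i z ≠ ⊤ := by
  refine ENNReal.add_ne_top.2 ⟨ENNReal.add_ne_top.2 ⟨ENNReal.mul_ne_top (by finiteness)
    (codeLen_ne_top hq), codeLen_ne_top hw⟩, ne_top_of_le_ne_top
    (codeLen_ne_top (zetaWeight_zero_ne_zero hκ)) (indicator_le_self' (fun _ _ => zero_le) z)⟩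

open Classical in
/-- The letter `l` if the prediction `l'` of it is wrong. -/
noncomputable def correction (l l' : L) : Option L := if l = l' then none else some l

lemma correction_ne_none_iff {l l' : L} : correction l l' ≠ none ↔ l ≠ l' := by
  simp [correction]

lemma getD_correction (l l' : L) : (correction l l').getD l' = l := by
  by_cases h : l = l' <;> simp [correction, h]

variable [Group G] [MulAction G X]

lemma LabelMeasurable.prediction {M : MeasurableSpace X} (hM : InvariantAlg G M) [Finite A]
    [Countable R] [Countable Γ] {a : X → A} (ha : LabelMeasurable M a) {f : X → R}
    (hf : LabelMeasurable M f) {γ : X → Γ} (hγ : LabelMeasurable M γ) {T : Finset G}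
    (ψ : (T → A) × R × Γ → L) :
    LabelMeasurable M fun x => ψ (fun t => a (t.1 • x), f x, γ x) :=
  ((LabelMeasurable.pi fun t : T => ha.smul hM t.1).prodMk (hf.prodMk hγ)).comp ψ

lemma isLocallyConstant_correctedCost [TopologicalSpace X] [ContinuousConstSMul G X]
    {P : X → L}
    (hP : IsLocallyConstant P) {a : X → A} (ha : IsLocallyConstant a) {f : X → R}
    (hf : IsLocallyConstant f) {γ : X → Γ} (hγ : IsLocallyConstant γ) {v : X → Z}
    (hv : IsLocallyConstant v) {T : Finset G} (ψ : (T → A) × R × Γ → L) (w : Z × Option L → ℝ≥0∞)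
    (q : R × Γ → A → ℝ≥0∞) (κ : ℝ≥0) (z₀ : Z × Option L) :
    IsLocallyConstant fun x => codingCost κ q w z₀ (f x, γ x) (a x)
      (v x, correction (P x) (ψ (fun t => a (t.1 • x), f x, γ x))) := by
  have hwindow : IsLocallyConstant fun x (t : T) => a (t.1 • x) :=
    isLocallyConstant_pi fun t => ha.comp_continuous (continuous_const_smul t.1)
  have hpred : IsLocallyConstant fun x => ψ (fun t => a (t.1 • x), f x, γ x) :=
    (hwindow.prodMk (hf.prodMk hγ)).comp ψ
  exact (((hf.prodMk hγ).prodMk ha).prodMk (hv.prodMk (hP.prodMk hpred))).comp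
    fun p : ((R × Γ) × A) × Z × L × L =>
      codingCost κ q w z₀ p.1.1 p.1.2 (p.2.1, correction p.2.2.1 p.2.2.2)

variable {F : MeasurableSpace X} [mX : MeasurableSpace X] {μ : Measure X}

theorem rokhlin_le_lintegral_codingCost [Countable G] (hF : F ≤ mX) (hFinv : InvariantAlg G F)
    [IsProbabilityMeasure μ] (hμ : IsPmp G μ) [Fintype A] [Countable S] [Countable Z] {a : X → A}
    {z : X → Z} {σ : X → S} {z₀ : Z} (ha : LabelMeasurable mX a) (hz : LabelMeasurable mX z)
    (hσ : MarkerDetermines G (F ⊔ invSigma G X) {x | z x ≠ z₀} z σ) {q : S → A → ℝ≥0∞}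
    (hq : ∀ s, IsPosSubprob (q s)) {w : Z → ℝ≥0∞} (hw : ∑' i, w i ≤ 1) (κ : ℝ≥0)
    (hgen : ∀ M : MeasurableSpace X, InvariantAlg G M → LabelMeasurable M σ →
      LabelMeasurable M a → LabelMeasurable M z → mX ≤ M) :
    rokhlin G F μ ≤ ∫⁻ x, codingCost κ q w z₀ (σ x) (a x) (z x) ∂μ := by
  refine ENNReal.le_of_forall_pos_le_add fun ε hε _ => ?_
  have hinv : InvariantAlg G (F ⊔ invSigma G X) := hFinv.sup invariantAlg_invSigma
  obtain ⟨β, hβ, haβ, hzβ, hcost⟩ := exists_isPartition_coding (sup_le hF invSigma_le) hinv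
    le_sup_right hμ ha hz hσ hq hw κ (ENNReal.coe_pos.2 hε)
  have hMinv : InvariantAlg G (sigmaG G (range β) ⊔ (F ⊔ invSigma G X)) :=
    (invariantAlg_sigmaG _).sup hinv
  have hle := hgen _ hMinv (hσ.determined _ hMinv le_sup_right hzβ) haβ hzβ
  rw [← sup_assoc] at hle
  calc rokhlin G F μ ≤ condEnt (F ⊔ invSigma G X) μ β :=
        sInf_le ⟨β, hβ, fun B hB => ⟨B, hle B hB, by simp⟩, rfl⟩
    _ ≤ _ := hcost

lemma MarkerDetermines.prodMk [Countable G] (hG : InvariantAlg G mX) [Countable R] [Countable Γ]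
    [Countable Z] [Countable L] {f : X → R} (hf : LabelMeasurable F f) {γ : X → Γ} {v : X → Z}
    {v₀ : Z} (hv : LabelMeasurable mX v)
    (hγ : MarkerDetermines G (invSigma G X) {x | v x ≠ v₀} v γ) {u : X → L} (u₀ : L)
    (hu : LabelMeasurable mX u) :
    MarkerDetermines G (F ⊔ invSigma G X) {x | (v x, u x) ≠ (v₀, u₀)} (fun x => (v x, u x))
      fun x => (f x, γ x) where
  determined M hM hle hz := (hf.mono (le_sup_left.trans hle)).prodMk
    (hγ.determined M hM (le_sup_right.trans hle) (hz.comp Prod.fst))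
  off_orbits := by
    rintro ⟨r, j⟩
    set V := {x | (v x, u x) ≠ (v₀, u₀)}
    have hsub : saturation G {x | v x ≠ v₀} ⊆ saturation G V :=
      saturation_mono fun x hx h => hx (Prod.mk.inj h).1
    rw [← singleton_prod_singleton, mk_preimage_prod, inter_sdiff_assoc,
      ← union_eq_self_of_subset_left hsub, ← sdiff_sdiff]
    refine .inter (hf.mono le_sup_left _) (le_sup_right (a := F) _ ((hγ.off_orbits j).diff ?_))
    exact measurableSet_invSigma_saturation hG (hv.prodMk hu {(v₀, u₀)}ᶜ)

theorem rokhlin_le_lintegral_correctedCost [Countable G] (hF : F ≤ mX) (hFinv : InvariantAlg G F)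
    [IsProbabilityMeasure μ] (hμ : IsPmp G μ) [Fintype A] [Countable R] [Finite Γ] [Finite L]
    {P : X → L} (hP : LabelMeasurable mX P)
    (hgen : ∀ M : MeasurableSpace X, InvariantAlg G M → LabelMeasurable M P → mX ≤ M)
    {a : X → A} (ha : LabelMeasurable mX a) {f : X → R} (hf : LabelMeasurable F f) {γ : X → Γ}
    {v : X → Option Γ} (hv : LabelMeasurable mX v)
    (hγ : MarkerDetermines G (invSigma G X) {x | v x ≠ none} v γ) {T : Finset G}
    (ψ : (T → A) × R × Γ → L) {q : R × Γ → A → ℝ≥0∞} (hq : ∀ s, IsPosSubprob (q s)) (κ : ℝ≥0)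
    {δ : ℝ≥0∞} (hδ : δ ≤ 1) :
    rokhlin G F μ ≤ ∫⁻ x, codingCost κ q (fun z => optionWeight Γ δ z.1 * optionWeight L δ z.2)
      (none, none) (f x, γ x) (a x)
      (v x, correction (P x) (ψ (fun t => a (t.1 • x), f x, γ x))) ∂μ := by
  have := Fintype.ofFinite Γ
  have := Fintype.ofFinite L
  have hG : InvariantAlg G mX := fun g _ hA => (hμ g).measurable hA
  have hγX : LabelMeasurable mX γ := hγ.determined mX hG invSigma_le hv
  have hu : LabelMeasurable mX fun x =>
      correction (P x) (ψ (fun t => a (t.1 • x), f x, γ x)) :=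
    (hP.prodMk (.prediction hG ha (hf.mono hF) hγX ψ)).comp fun p => correction p.1 p.2
  refine rokhlin_le_lintegral_codingCost hF hFinv hμ ha (hv.prodMk hu)
    (.prodMk hG hf hv hγ none hu) hq ?_ κ fun M hM hσM haM hzM => hgen M hM ?_
  · rw [tsum_fintype, Fintype.sum_prod_type, ← Fintype.sum_mul_sum]
    exact mul_le_one' (sum_optionWeight_le_one hδ) (sum_optionWeight_le_one hδ)
  · have hpred := LabelMeasurable.prediction hM haM (hσM.comp Prod.fst) (hσM.comp Prod.snd) ψ
    simpa only [getD_correction] using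
      ((hzM.comp Prod.snd).prodMk hpred).comp fun p => p.1.getD p.2

end Correction

/-! ### Locally constant upper bounds for Rokhlin entropy -/

section UpperBound

variable {G X A R S Γ L : Type*} [mX : MeasurableSpace X] {μ : Measure X}

lemma optionWeight_ne_zero {δ : ℝ≥0∞} (hδ : δ ≠ 0) (hδ1 : δ < 1) (o : Option R) :
    optionWeight R δ o ≠ 0 := by
  cases o <;> simp [optionWeight, hδ, tsub_eq_zero_iff_le, hδ1]

lemma codeLen_optionWeight_le (δ : ℝ≥0∞) (o : Option R) :
    codeLen (optionWeight R δ o) ≤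
      codeLen (1 - δ) + {o | o ≠ none}.indicator (fun _ => codeLen (δ / Nat.card R)) o := by
  cases o <;> simp [optionWeight]

lemma codingCost_optionWeight_le (κ : ℝ≥0) (δ : ℝ≥0∞) (q : S → A → ℝ≥0∞) (s : S) (i : A)
    (v : Option Γ) (u : Option L) :
    codingCost κ q (fun z => optionWeight Γ δ z.1 * optionWeight L δ z.2) (none, none) s i (v, u) ≤
      (1 + κ) * codeLen (q s i) + 2 * codeLen (1 - δ) +
        {v | v ≠ none}.indicator
          (fun _ => codeLen (δ / Nat.card Γ) + codeLen (zetaWeight κ 0)) v +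
        {u | u ≠ none}.indicator
          (fun _ => codeLen (δ / Nat.card L) + codeLen (zetaWeight κ 0)) u := by
  have hmarker : {z : Option Γ × Option L | z ≠ (none, none)}.indicator
      (fun _ => codeLen (zetaWeight κ 0)) (v, u) ≤
      {v | v ≠ none}.indicator (fun _ => codeLen (zetaWeight κ 0)) v +
        {u | u ≠ none}.indicator (fun _ => codeLen (zetaWeight κ 0)) u := by
    cases v <;> cases u <;> simp
  have hlabel := (codeLen_mul_le (optionWeight Γ δ v) (optionWeight L δ u)).trans
    (add_le_add (codeLen_optionWeight_le δ v) (codeLen_optionWeight_le δ u))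
  refine (add_le_add (add_le_add_right hlabel _) hmarker).trans_eq ?_
  cases v <;> cases u <;> simp <;> ring

lemma lintegral_add_indicator_comp (f : X → ℝ≥0∞) {o : X → R} (ho : LabelMeasurable mX o)
    (s : Set R) (B : ℝ≥0∞) :
    ∫⁻ x, f x + s.indicator (fun _ => B) (o x) ∂μ = ∫⁻ x, f x ∂μ + B * μ (o ⁻¹' s) := by
  rw [← lintegral_indicator_const (ho s) B]
  exact lintegral_add_right f (measurable_const.indicator (ho s))

lemma lintegral_codingCost_optionWeight_le [IsProbabilityMeasure μ] (κ : ℝ≥0) (δ : ℝ≥0∞)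
    {q : S → A → ℝ≥0∞} {Q : ℝ≥0∞} (hQ : ∀ s i, codeLen (q s i) ≤ Q) {ρ ρ' : X → S × A}
    (hρ : MeasurableSet {x | ρ x ≠ ρ' x}) {v : X → Option Γ} (hv : LabelMeasurable mX v)
    {u : X → Option L} (hu : LabelMeasurable mX u) :
    ∫⁻ x, codingCost κ q (fun z => optionWeight Γ δ z.1 * optionWeight L δ z.2) (none, none)
        (ρ' x).1 (ρ' x).2 (v x, u x) ∂μ ≤
      (1 + κ) * (∫⁻ x, codeLen (q (ρ x).1 (ρ x).2) ∂μ + Q * μ {x | ρ x ≠ ρ' x}) +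
        2 * codeLen (1 - δ) +
        (codeLen (δ / Nat.card Γ) + codeLen (zetaWeight κ 0)) * μ {x | v x ≠ none} +
        (codeLen (δ / Nat.card L) + codeLen (zetaWeight κ 0)) * μ {x | u x ≠ none} := by
  have hcode := lintegral_le_add_const_mul_measure_ne (μ := μ) hρ
    (c := fun _ r => codeLen (q r.1 r.2)) fun _ r => hQ r.1 r.2
  refine (lintegral_mono fun x => codingCost_optionWeight_le κ δ q _ _ _ _).trans ?_
  rw [lintegral_add_indicator_comp _ hu, lintegral_add_indicator_comp _ hv,
    lintegral_add_right _ measurable_const, lintegral_const, measure_univ, mul_one,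
    lintegral_const_mul' _ _ (by finiteness)]
  gcongr
  all_goals rfl

lemma measure_ne_prediction_le [Group G] [MulAction G X] (hμ : IsPmp G μ) {T : Finset G}
    (P : X → L) (ψ : (T → A) × S → L) (ρ ρ' : X → S × A) :
    μ {x | P x ≠ ψ (fun t => (ρ' (t.1 • x)).2, (ρ' x).1)} ≤
      μ {x | P x ≠ ψ (fun t => (ρ (t.1 • x)).2, (ρ x).1)} +
        (1 + T.card) * μ {x | ρ x ≠ ρ' x} := by
  have hsub : {x | P x ≠ ψ (fun t => (ρ' (t.1 • x)).2, (ρ' x).1)} ⊆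
      {x | P x ≠ ψ (fun t => (ρ (t.1 • x)).2, (ρ x).1)} ∪
        ({x | ρ x ≠ ρ' x} ∪ {x | ∃ t : T, t.1 • x ∈ {x | ρ x ≠ ρ' x}}) := by
    intro x hx
    by_contra! hcon
    simp only [mem_union, mem_ofPred_eq, not_or, not_not, not_exists] at hcon
    obtain ⟨hP, hρ, hT⟩ := hcon
    exact hx (by simp only [← hT, ← hρ, hP])
  calc _ ≤ _ := measure_mono hsub
    _ ≤ _ := (measure_union_le _ _).trans (add_le_add_right (measure_union_le _ _) _)
    _ ≤ _ := by
        gcongr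
        rw [add_mul, one_mul]
        gcongr
        simpa using measure_exists_smul_mem_le hμ (fun t : T => t.1) {x | ρ x ≠ ρ' x}

lemma lintegral_correctedCost_le [Group G] [MulAction G X] [IsProbabilityMeasure μ]
    (hμ : IsPmp G μ) (κ : ℝ≥0) (δ : ℝ≥0∞) {q : S → A → ℝ≥0∞} {Q : ℝ≥0∞}
    (hQ : ∀ s i, codeLen (q s i) ≤ Q) {P : X → L} {T : Finset G} (ψ : (T → A) × S → L)
    {ρ ρ' : X → S × A} (hρ : MeasurableSet {x | ρ x ≠ ρ' x}) {v : X → Option Γ}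
    (hv : LabelMeasurable mX v)
    (hu : LabelMeasurable mX fun x =>
      correction (P x) (ψ (fun t => (ρ' (t.1 • x)).2, (ρ' x).1))) {η : ℝ≥0∞}
    (hρη : μ {x | ρ x ≠ ρ' x} ≤ η) (hvη : μ {x | v x ≠ none} ≤ η) :
    ∫⁻ x, codingCost κ q (fun z => optionWeight Γ δ z.1 * optionWeight L δ z.2) (none, none)
        (ρ' x).1 (ρ' x).2
        (v x, correction (P x) (ψ (fun t => (ρ' (t.1 • x)).2, (ρ' x).1))) ∂μ ≤
      (1 + κ) * ∫⁻ x, codeLen (q (ρ x).1 (ρ x).2) ∂μ + 2 * codeLen (1 - δ) +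
        (codeLen (δ / Nat.card L) + codeLen (zetaWeight κ 0)) *
          μ {x | P x ≠ ψ (fun t => (ρ (t.1 • x)).2, (ρ x).1)} +
        ((1 + κ) * Q + (codeLen (δ / Nat.card Γ) + codeLen (zetaWeight κ 0)) +
          (codeLen (δ / Nat.card L) + codeLen (zetaWeight κ 0)) * (1 + T.card)) * η := by
  refine (lintegral_codingCost_optionWeight_le κ δ hQ hρ hv hu).trans ?_
  have hpred := (measure_ne_prediction_le hμ P ψ ρ ρ').trans
    (add_le_add_right (mul_le_mul_right hρη (1 + (T.card : ℝ≥0∞))) _)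
  simp only [correction_ne_none_iff]
  grw [hpred, hρη, hvη]
  exact le_of_eq (by ring)

end UpperBound

section UpperBoundExists

lemma exists_rate_lt {A c : ℝ≥0∞} (h : A < c) :
    ∃ κ : ℝ≥0, 0 < κ ∧ κ < 1 ∧ (1 + κ) * A + 2 * codeLen (1 - κ) < c := by
  have hlim : Tendsto (fun κ : ℝ≥0 => (1 + κ : ℝ≥0∞) * A + 2 * codeLen (1 - κ)) (𝓝[>] 0)
      (𝓝 ((1 + (0 : ℝ≥0)) * A + 2 * codeLen (1 - (0 : ℝ≥0)))) := by
    refine Tendsto.mono_left ?_ nhdsWithin_le_nhds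
    have hcoe : Tendsto (fun κ : ℝ≥0 => (κ : ℝ≥0∞)) (𝓝 0) (𝓝 ((0 : ℝ≥0) : ℝ≥0∞)) :=
      ENNReal.continuous_coe.tendsto 0
    exact (ENNReal.Tendsto.mul_const (hcoe.const_add 1) (Or.inr h.ne_top)).add
      (ENNReal.Tendsto.const_mul ((continuous_codeLen.tendsto _).comp
        (ENNReal.Tendsto.sub tendsto_const_nhds hcoe (by simp))) (Or.inr (by simp)))
  have hlt : (1 + (0 : ℝ≥0)) * A + 2 * codeLen (1 - (0 : ℝ≥0)) < c := by
    simpa [codeLen_one] using h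
  have hsmall : ∀ᶠ κ : ℝ≥0 in 𝓝[>] 0, 0 < κ ∧ κ < 1 := Ioo_mem_nhdsGT one_pos
  obtain ⟨κ, ⟨hκ, hκ1⟩, hκc⟩ := (hsmall.and (hlim.eventually_lt_const hlt)).exists
  exact ⟨κ, hκ, hκ1, hκc⟩

variable {G X R Γ L : Type*} [Group G] [MulAction G X] [TopologicalSpace X]
  [mX : MeasurableSpace X] [CompactSpace X] [T2Space X] [TotallyDisconnectedSpace X]
  [SecondCountableTopology X] [BorelSpace X] [Finite L]
  {μ : Measure X} [IsProbabilityMeasure μ]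

lemma exists_lintegral_correctedCost_lt {A : Type*} [Finite A] [Finite R] [Finite Γ]
    (hμ : IsPmp G μ) {P : X → L} (hP : IsLocallyConstant P) {a : X → A}
    (ha : LabelMeasurable mX a) {f : X → R} (hf : IsLocallyConstant f) {γ : X → Γ}
    (hγ : LabelMeasurable mX γ) (hγs : SparselyCodable G μ γ) {T : Finset G}
    (ψ : (T → A) × R × Γ → L) {q : R × Γ → A → ℝ≥0∞} (hq : ∀ s i, q s i ≠ 0) {κ : ℝ≥0}
    (hκ : 0 < κ) {δ : ℝ≥0∞} (hδ : δ ≠ 0) {c : ℝ≥0∞}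
    (hc : (1 + κ) * ∫⁻ x, codeLen (q (f x, γ x) (a x)) ∂μ + 2 * codeLen (1 - δ) +
      (codeLen (δ / Nat.card L) + codeLen (zetaWeight κ 0)) *
        μ {x | P x ≠ ψ (fun t => a (t.1 • x), f x, γ x)} < c) :
    ∃ (a' : X → A) (γ' : X → Γ) (v : X → Option Γ), IsLocallyConstant a' ∧
      IsLocallyConstant γ' ∧ IsLocallyConstant v ∧
      MarkerDetermines G (invSigma G X) {x | v x ≠ none} v γ' ∧
      ∫⁻ x, codingCost κ q (fun z => optionWeight Γ δ z.1 * optionWeight L δ z.2) (none, none)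
        (f x, γ' x) (a' x)
        (v x, correction (P x) (ψ (fun t => a' (t.1 • x), f x, γ' x))) ∂μ < c := by
  have := Fintype.ofFinite ((R × Γ) × A)
  set Q := ∑ p : (R × Γ) × A, codeLen (q p.1 p.2)
  have hQ (s : R × Γ) (i : A) : codeLen (q s i) ≤ Q :=
    Finset.single_le_sum (f := fun p : (R × Γ) × A => codeLen (q p.1 p.2))
      (fun _ _ => zero_le) (Finset.mem_univ (s, i))
  have hQtop : Q ≠ ⊤ := ENNReal.sum_ne_top.2 fun p _ => codeLen_ne_top (hq p.1 p.2)
  have hB (n : ℕ) : codeLen (δ / n) + codeLen (zetaWeight κ 0) ≠ ⊤ :=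
    ENNReal.add_ne_top.2 ⟨codeLen_ne_top (ENNReal.div_pos hδ (by finiteness)).ne',
      codeLen_ne_top (zetaWeight_zero_ne_zero hκ)⟩
  obtain ⟨η, hη, hlt⟩ := exists_pos_add_mul_lt (B := (1 + κ) * Q +
      (codeLen (δ / Nat.card Γ) + codeLen (zetaWeight κ 0)) +
        (codeLen (δ / Nat.card L) + codeLen (zetaWeight κ 0)) * (1 + T.card))
    (by finiteness [hB (Nat.card Γ), hB (Nat.card L)]) hc
  obtain ⟨γ', v, hγ', hv, hγlt, hvlt, hdet⟩ := hγs (η / 2) (ENNReal.half_pos hη.ne')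
  obtain ⟨a', ha', halt⟩ := exists_isLocallyConstant_ne_lt (μ := μ) ha
    (ENNReal.half_pos hη.ne')
  refine ⟨a', γ', v, ha', hγ', hv, hdet, lt_of_le_of_lt ?_ hlt⟩
  have hfX := LabelMeasurable.of_isLocallyConstant hf
  have ha'X := LabelMeasurable.of_isLocallyConstant ha'
  have hγ'X := LabelMeasurable.of_isLocallyConstant hγ'
  refine lintegral_correctedCost_le hμ κ δ hQ ψ (ρ := fun x => ((f x, γ x), a x))
    (ρ' := fun x => ((f x, γ' x), a' x)) ?_ (.of_isLocallyConstant hv) ?_ ?_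
    (hvlt.le.trans ENNReal.half_le_self)
  · exact (((hfX.prodMk hγ).prodMk ha).prodMk ((hfX.prodMk hγ'X).prodMk ha'X)) {p | p.1 ≠ p.2}
  · exact ((LabelMeasurable.of_isLocallyConstant hP).prodMk (.prediction
      (fun g _ h => (hμ g).measurable h) ha'X hfX hγ'X ψ)).comp fun p => correction p.1 p.2
  · calc μ _ ≤ μ ({x | γ x ≠ γ' x} ∪ {x | a x ≠ a' x}) := measure_mono fun x hx => by
          simpa [imp_iff_not_or] using hx
      _ ≤ η / 2 + η / 2 := (measure_union_le _ _).trans (add_le_add hγlt.le halt.le)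
      _ = η := ENNReal.add_halves η

variable [ContinuousConstSMul G X] [Countable G]

theorem exists_isLocallyConstant_rokhlin_le {C : Set (Set X)} (hC : ∀ s ∈ C, IsClopen s)
    (hinv : InvariantAlg G (.generateFrom C)) (hμ : IsPmp G μ) {P : X → L}
    (hP : IsLocallyConstant P)
    (hgen : ∀ M : MeasurableSpace X, InvariantAlg G M → LabelMeasurable M P → mX ≤ M)
    (hsparse : ∀ K : Finset (Set X),
      (∀ s ∈ K, MeasurableSet s ∧ ∀ g : G, (fun x => g • x) ⁻¹' s = s) →
        SparselyCodable G μ (membershipPattern K))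
    {c : ℝ≥0∞} (hc : rokhlin G (.generateFrom C) μ < c) :
    ∃ θ : X → ℝ≥0∞, IsLocallyConstant θ ∧ (∀ x, θ x ≠ ⊤) ∧ ∫⁻ x, θ x ∂μ < c ∧
      ∀ ν : Measure X, IsProbabilityMeasure ν → IsPmp G ν →
        rokhlin G (.generateFrom C) ν ≤ ∫⁻ x, θ x ∂ν := by
  classical
  obtain ⟨c', hrk, hc'⟩ := exists_between hc
  obtain ⟨κ, hκ, hκ1, hκc⟩ := exists_rate_lt hc'
  have hδ : (κ : ℝ≥0∞) ≠ 0 := by simpa using hκ.ne'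
  have hδ1 : (κ : ℝ≥0∞) < 1 := by simpa using hκ1
  obtain ⟨ε, hε, hεc⟩ := exists_pos_add_mul_lt
    (B := codeLen (κ / Nat.card L) + codeLen (zetaWeight κ 0))
    (ENNReal.add_ne_top.2 ⟨codeLen_ne_top (ENNReal.div_pos hδ (by finiteness)).ne',
      codeLen_ne_top (zetaWeight_zero_ne_zero hκ)⟩) hκc
  have hCX (s : Set X) (hs : s ∈ C) : MeasurableSet s := (hC s hs).isOpen.measurableSet
  obtain ⟨n, a, J, K, T, ψ, q, ha, hJ, hK, hψ, hq, hlt⟩ := exists_finite_coding_data hCX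
    (fun g _ h => (hμ g).measurable h) (.of_isLocallyConstant hP) hrk hε
  have hf := isLocallyConstant_membershipPattern fun j hj => hC j (hJ hj)
  obtain ⟨a', γ', v, ha', hγ', hv, hdet, hθ⟩ := exists_lintegral_correctedCost_lt hμ hP ha hf
    (labelMeasurable_membershipPattern fun s hs => (hK s hs).1) (hsparse K hK) ψ
    (fun s i => (hq s).ne_zero i) hκ hδ (lt_of_le_of_lt (by gcongr) hεc)
  refine ⟨_, ?_, ?_, hθ, fun ν _ hν =>
      rokhlin_le_lintegral_correctedCost (MeasurableSpace.generateFrom_le hCX) hinv hν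
        (.of_isLocallyConstant hP) hgen (.of_isLocallyConstant ha')
        (labelMeasurable_membershipPattern fun j hj =>
          MeasurableSpace.measurableSet_generateFrom (hJ hj))
        (.of_isLocallyConstant hv) hdet ψ hq κ hδ1.le⟩
  · exact isLocallyConstant_correctedCost hP ha' hf hγ' hv ψ _ q κ _
  · exact fun x => codingCost_ne_top hκ _ ((hq _).ne_zero _) (mul_ne_zero
      (optionWeight_ne_zero hδ hδ1 _) (optionWeight_ne_zero hδ hδ1 _))

end UpperBoundExists

/-! ### Upper semicontinuity -/

section Semicontinuity

variable {X : Type*}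

lemma continuous_lintegral_of_isLocallyConstant [TopologicalSpace X] [CompactSpace X]
    [MeasurableSpace X] [OpensMeasurableSpace X] {θ : X → ℝ≥0∞} (hθ : IsLocallyConstant θ)
    (hfin : ∀ x, θ x ≠ ⊤) :
    Continuous fun ν : ProbabilityMeasure X => ∫⁻ x, θ x ∂(ν : Measure X) := by
  refine continuous_iff_continuousAt.2 fun μ => ?_
  have h := ProbabilityMeasure.tendsto_iff_forall_lintegral_tendsto.1 (tendsto_id (x := 𝓝 μ))
    (BoundedContinuousFunction.mkOfCompact ⟨_, (hθ.comp ENNReal.toNNReal).continuous⟩)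
  simpa [ContinuousAt, ENNReal.coe_toNNReal (hfin _)] using h

lemma membershipPattern_smul {G : Type*} [Group G] [MulAction G X] {K : Finset (Set X)}
    (hK : ∀ s ∈ K, ∀ g : G, (fun x => g • x) ⁻¹' s = s) (g : G) (x : X) :
    membershipPattern K (g • x) = membershipPattern K x :=
  membershipPattern_eq_iff.2 fun s hs => Set.ext_iff.1 (hK s hs g) x

/-- The symbolic coding of a point by the labels of its translates. -/
def itinerary (G : Type*) {L : Type*} [SMul G X] (P : X → L) (x : X) (g : G) : L := P (g • x)

lemma isClosedEmbedding_itinerary {G L : Type*} [SMul G X] [TopologicalSpace X] [CompactSpace X]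
    [ContinuousConstSMul G X] [TopologicalSpace L] [DiscreteTopology L] {P : X → L}
    (hP : IsLocallyConstant P) (hinj : Injective (itinerary G P)) :
    IsClosedEmbedding (itinerary G P) :=
  Continuous.isClosedEmbedding
    (continuous_pi fun g => hP.continuous.comp (continuous_const_smul g)) hinj

lemma le_of_isInducing_itinerary {G L : Type*} [Group G] [MulAction G X] [Countable G] [Countable L]
    [TopologicalSpace L] [DiscreteTopology L] [TopologicalSpace X] [mX : MeasurableSpace X]
    [BorelSpace X] {P : X → L} (hP : IsInducing (itinerary G P)) :
    ∀ M : MeasurableSpace X, InvariantAlg G M → LabelMeasurable M P → mX ≤ M := by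
  let : MeasurableSpace L := ⊤
  rw [BorelSpace.measurable_eq (α := X), hP.eq_induced, borel_comap,
    ← BorelSpace.measurable_eq (α := G → L)]
  intro M hM hPM
  have hmeas : Measurable (itinerary G P) := measurable_pi_lambda _ fun g s _ => hM g _ (hPM s)
  exact hmeas.comap_le

end Semicontinuity

section Shift

lemma isLocallyConstant_eval {G L : Type*} [TopologicalSpace L] [DiscreteTopology L] (g : G) :
    IsLocallyConstant fun x : G → L => x g :=
  (IsLocallyConstant.iff_continuous _).2 (continuous_apply g)

lemma injective_itinerary_eval_one {G L : Type*} [Group G] :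
    Injective (itinerary G fun x : G → L => x 1) := by
  refine fun x y hxy => funext fun k => ?_
  have hcoord (z : G → L) : (k⁻¹ • z) 1 = z k := congrArg z (by simp)
  simpa only [itinerary, hcoord] using congrFun hxy k⁻¹

instance continuousConstSMul_shift {G L : Type*} [Group G] [TopologicalSpace L] :
    ContinuousConstSMul G (G → L) where
  continuous_const_smul g := continuous_pi fun h => continuous_apply (g⁻¹ * h)

end Shift

theorem statement14_general {G X L : Type*} [Group G] [Countable G] [MulAction G X] [Finite L]
    [TopologicalSpace X] [CompactSpace X] [ContinuousConstSMul G X] [MeasurableSpace X]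
    [BorelSpace X] {P : X → L} (hP : IsLocallyConstant P) (hinj : Injective (itinerary G P))
    {C : Set (Set X)} (hC : ∀ s ∈ C, IsClopen s) (hinv : InvariantAlg G (.generateFrom C))
    {μ : ProbabilityMeasure X} (hμ : IsPmp G (μ : Measure X))
    (h : Aperiodic G (μ : Measure X) ∨ IsErgodicInv G (μ : Measure X) ∨ Group.FG G) :
    UpperSemicontinuousWithinAt
      (fun ν : ProbabilityMeasure X => rokhlin G (.generateFrom C) (ν : Measure X))
      {ν : ProbabilityMeasure X | IsPmp G (ν : Measure X)} μ := by
  let : TopologicalSpace L := ⊥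
  have : DiscreteTopology L := ⟨rfl⟩
  have hemb := isClosedEmbedding_itinerary hP hinj
  have : T2Space X := hemb.t2Space
  have : SecondCountableTopology X := hemb.isEmbedding.secondCountableTopology
  have : TotallyDisconnectedSpace X := ⟨isTotallyDisconnected_of_image
    hemb.continuous.continuousOn hinj (isTotallyDisconnected_of_totallyDisconnectedSpace _)⟩
  have hsparse (K : Finset (Set X))
      (hK : ∀ s ∈ K, MeasurableSet s ∧ ∀ g : G, (fun x => g • x) ⁻¹' s = s) :
      SparselyCodable G (μ : Measure X) (membershipPattern K) := by
    have hpat := labelMeasurable_membershipPattern fun s hs => (hK s hs).1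
    have hpatinv := membershipPattern_smul fun s hs => (hK s hs).2
    rcases h with hap | herg | hfg
    · exact sparselyCodable_of_aperiodic hμ hap hpat hpatinv
    · exact sparselyCodable_of_isErgodicInv herg hpat hpatinv
    · exact sparselyCodable_of_fg hμ hpat hpatinv
  intro c hc
  obtain ⟨θ, hθ, hfin, hlt, hle⟩ := exists_isLocallyConstant_rokhlin_le hC hinv hμ hP
    (le_of_isInducing_itinerary hemb.isInducing) hsparse hc
  filter_upwards [self_mem_nhdsWithin, nhdsWithin_le_nhds
    ((continuous_lintegral_of_isLocallyConstant hθ hfin).continuousAt.eventually_lt_const hlt)]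
    with ν hν hνc using (hle ν inferInstance hν).trans_lt hνc

/-- Corollary 5.6.(ii): on the space of invariant Borel probability
measures on `L^G` with the weak* topology, the relative Rokhlin entropy
`μ ↦ rh_G(L^G, μ | F)` is upper-semicontinuous on the aperiodic and the ergodic invariant
measures; if `G` is finitely generated it is upper-semicontinuous on all invariant
measures. -/
theorem statement14 {G L : Type*} (F : MeasurableSpace (G → L)) [Group G] [Countable G]
    [Fintype L] [TopologicalSpace L] [DiscreteTopology L]
    [mGL : MeasurableSpace (G → L)] [BorelSpace (G → L)]
    (hFle : F ≤ mGL) (hFinv : InvariantAlg G F)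
    (hFgen : ∃ C : Set (Set (G → L)), C.Countable ∧ (∀ A ∈ C, IsClopen A) ∧
      F = MeasurableSpace.generateFrom C) :
    UpperSemicontinuousOn
        (fun μ : ProbabilityMeasure (G → L) => rokhlin G F (μ : Measure (G → L)))
        ({μ : ProbabilityMeasure (G → L) |
            IsPmp G (μ : Measure (G → L)) ∧ Aperiodic G (μ : Measure (G → L))} ∪
          {μ : ProbabilityMeasure (G → L) |
            IsPmp G (μ : Measure (G → L)) ∧ IsErgodicInv G (μ : Measure (G → L))}) ∧
      (Group.FG G →
        UpperSemicontinuousOn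
          (fun μ : ProbabilityMeasure (G → L) => rokhlin G F (μ : Measure (G → L)))
          {μ : ProbabilityMeasure (G → L) | IsPmp G (μ : Measure (G → L))}) := by
  obtain ⟨C, -, hC, rfl⟩ := hFgen
  have husc {μ : ProbabilityMeasure (G → L)} := statement14_general (μ := μ)
    (isLocallyConstant_eval 1) injective_itinerary_eval_one hC hFinv
  refine ⟨fun μ hμ => UpperSemicontinuousWithinAt.mono ?_
    (union_subset (fun _ => And.left) fun _ => And.left), fun hfg μ hμ => husc hμ (.inr (.inr hfg))⟩
  exact hμ.elim (fun h => husc h.1 (.inl h.2)) fun h => husc h.1 (.inr (.inl h.2))
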